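/- arXiv:2110.01173 — 3 statements merged into one kernel-verified Lean document; each statement's English description precedes it below -/
import Mathlib

section
/- For all rational numbers a, b, c with a ≠ 0 and every complex number x, the four cubic polynomials f₁(x) = c·x³ + 3b·x² + 3a·x + 1, f₂(x) = (ab+c)·x³ + (3bc+2a²+b)·x² + (2b²+ac+3a)·x + ab + 1, f₃(x) = (a³+b³+c³)·x³ + 3(a²+2ab²+bc²)·x² + 3(a+2a²b+b²c)·x + 1 + 2a³ + b³, and f₄(x) = (ab+2abc+c³)·x³ + (2a²+b+2a²c+3ab²+bc+3b²c)·x² + (3a+3a²b+ac+2b²+2b²c+ac²)·x + 1 + 2ab + abc do not vanish simultaneously: at least one of f₁(x), f₂(x), f₃(x), f₄(x) is nonzero. -/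
set_option synthInstance.maxHeartbeats 400000 in
set_option synthInstance.maxSize 4096 in
lemma core_mod2 : ∀ u w Z A B C l n : ZMod 2, Z + 3*A + 3*B + C = 0 → B + C = u*n → Z + A = w*l →
    u^3*(2*A^2+A*B-2*B*Z) + w^3*(2*B^2+A*B+3*B*C+A*C) = 0 →
    u^3*l^3 + w^3*n^3 + 2*(A+B)^3 - B^3 = 0 →
    (C = 0 ∨ u^6*Z^2 - w^6*C^2 = 3*B*(B*u*w^5 - C*w^6)) →
    ¬ (u = 0 ∧ w = 0) → ¬ (Z = 0 ∧ A = 0 ∧ B = 0) →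
    (u = 0 ∧ w = 1 ∧ B = 0 ∧ n = 0 ∧ A = 1 ∧ l = 0) ∨
    (u = 1 ∧ w = 1 ∧ A = 0 ∧ B = 0 ∧ C = 1 ∧ Z = 1) ∨
    (u = 1 ∧ w = 1 ∧ A = 1 ∧ B = 0 ∧ C = 0) ∨
    (u = 1 ∧ w = 0 ∧ Z = 0 ∧ A = 0 ∧ B = 1 ∧ C = 1 ∧ l = 1) ∨
    (u = 1 ∧ w = 0 ∧ A = 1 ∧ B = 0 ∧ l = 0 ∧ C = 0) := by
  decide

lemma even_of_cast {m : ℤ} (h : (m : ZMod 2) = 0) : ∃ k, m = 2*k := by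
  have := (ZMod.intCast_zmod_eq_zero_iff_dvd m 2).1 h
  exact this

lemma odd_of_cast {m : ℤ} (h : (m : ZMod 2) = 1) : ∃ k, m = 2*k+1 := by
  have h2 : ((m - 1 : ℤ) : ZMod 2) = 0 := by push_cast; rw [h]; ring
  obtain ⟨k, hk⟩ := even_of_cast h2
  exact ⟨k, by omega⟩

lemma core_int (u w Z A B C l n : ℤ) (hw : w ≠ 0) (hA : A ≠ 0)
    (huw : IsCoprime u w) (hz : ¬ (2 ∣ Z ∧ 2 ∣ A ∧ 2 ∣ B))
    (h1 : Z + 3*A + 3*B + C = 0) (hn : B + C = u*n) (hl : Z + A = w*l)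
    (h2 : u^3*(2*A^2+A*B-2*B*Z) + w^3*(2*B^2+A*B+3*B*C+A*C) = 0)
    (h3 : u^3*l^3 + w^3*n^3 + 2*(A+B)^3 - B^3 = 0)
    (h4 : C = 0 ∨ u^6*Z^2 - w^6*C^2 = 3*B*(B*u*w^5 - C*w^6)) : False := by
  have d : ∀ m : ℤ, (m : ZMod 2) = 0 ↔ 2 ∣ m := fun m => ZMod.intCast_zmod_eq_zero_iff_dvd m 2
  have key := core_mod2 u w Z A B C l n (by exact_mod_cast congrArg (Int.cast : ℤ → ZMod 2) h1)
    (by exact_mod_cast congrArg (Int.cast : ℤ → ZMod 2) hn)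
    (by exact_mod_cast congrArg (Int.cast : ℤ → ZMod 2) hl)
    (by exact_mod_cast congrArg (Int.cast : ℤ → ZMod 2) h2)
    (by exact_mod_cast congrArg (Int.cast : ℤ → ZMod 2) h3)
    (by
      rcases h4 with h | h
      · left; exact_mod_cast congrArg (Int.cast : ℤ → ZMod 2) h
      · right; exact_mod_cast congrArg (Int.cast : ℤ → ZMod 2) h)
    (by
      rw [d, d]
      rintro ⟨hu2, hw2⟩
      have := huw.isUnit_of_dvd' hu2 hw2
      exact absurd this (by decide)) (by rw [d, d, d]; exact hz)
  rcases key with ⟨e1, e2, e3, e4, e5, e6⟩ | ⟨e1, e2, e3, e4, e5, e6⟩ | ⟨e1, e2, e3, e4, e5⟩ |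
    ⟨e1, e2, e3, e4, e5, e6, e7⟩ | ⟨e1, e2, e3, e4, e5, e6⟩
  · obtain ⟨B', rfl⟩ := even_of_cast e3
    obtain ⟨n', rfl⟩ := even_of_cast e4
    obtain ⟨l', rfl⟩ := even_of_cast e6
    obtain ⟨A', rfl⟩ := odd_of_cast e5
    ring_nf at h3
    omega
  · rcases h4 with h | h4
    · rw [h] at e5; exact absurd e5 (by decide)
    obtain ⟨A', hA'⟩ := even_of_cast e3
    obtain ⟨B', hB'⟩ := even_of_cast e4
    obtain ⟨Z', hZ'⟩ := odd_of_cast e6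
    have hC : C = -(Z + 3*A + 3*B) := by linarith
    have h3' : u^6*(Z+A)^3 + u^3*w^3*(2*(A+B)^3-B^3) + w^6*(B+C)^3 = 0 := by
      rw [hn, hl]; linear_combination u^3*w^3*h3
    have q2 : A*(2*A*u^3+B*u^3+w^3*B+w^3*C) + B*(-2*Z*u^3+2*B*w^3+3*C*w^3) = 0 := by
      linear_combination h2
    have q3 : A*(Z*w^6*(6*Z+9*A+18*B) + 2*0 + (u^6*(3*Z^2+3*Z*A+A^2) - w^6*3*(3*Z^2+3*Z*(3*A+2*B)+(3*A+2*B)^2)) + u^3*w^3*2*(A^2+3*A*B+3*B^2))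
        + B*(Z*w^6*(6*Z+9*B) + Z*(3*B*u*w^5 - 3*C*w^6) + u^3*w^3*B^2 - w^6*2*(3*Z^2+3*Z*(3*A+2*B)+(3*A+2*B)^2)) = 0 := by
      have e4 := congrArg (fun y => Z*y) h4
      rw [hC] at h3' e4 ⊢
      linear_combination h3' - e4
    generalize ho1 : (2*A*u^3+B*u^3+w^3*B+w^3*C) = o1 at q2
    generalize ho2 : (-2*Z*u^3+2*B*w^3+3*C*w^3) = o2 at q2
    generalize ho3 : (Z*w^6*(6*Z+9*A+18*B) + 2*0 + (u^6*(3*Z^2+3*Z*A+A^2) - w^6*3*(3*Z^2+3*Z*(3*A+2*B)+(3*A+2*B)^2)) + u^3*w^3*2*(A^2+3*A*B+3*B^2)) = o3 at q3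
    generalize ho4 : (Z*w^6*(6*Z+9*B) + Z*(3*B*u*w^5 - 3*C*w^6) + u^3*w^3*B^2 - w^6*2*(3*Z^2+3*Z*(3*A+2*B)+(3*A+2*B)^2)) = o4 at q3
    have p1 : (o1 : ZMod 2) = 1 := by
      rw [← ho1]; push_cast; rw [e1, e2, e3, e4, e5]; decide
    have p2 : (o2 : ZMod 2) = 1 := by
      rw [← ho2]; push_cast; rw [e1, e2, e4, e5, e6]; decide
    have p3 : (o3 : ZMod 2) = 0 := by
      rw [← ho3]; push_cast; rw [e1, e2, e3, e4, e6]; decide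
    have p4 : (o4 : ZMod 2) = 1 := by
      rw [← ho4]; push_cast; rw [e1, e2, e3, e4, e5, e6]; decide
    have hB0 : B * (o1*o4 - o2*o3) = 0 := by linear_combination o1*q3 - o3*q2
    have hne : o1*o4 - o2*o3 ≠ 0 := by
      intro h
      have := congrArg (Int.cast : ℤ → ZMod 2) h
      push_cast at this
      rw [p1, p2, p3, p4] at this
      exact absurd this (by decide)
    have hB : B = 0 := by
      rcases mul_eq_zero.1 hB0 with h | h
      · exact h
      · exact absurd h hne
    rw [hB, zero_mul, add_zero] at q2
    rcases mul_eq_zero.1 q2 with h | h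
    · exact hA h
    · rw [h] at p1; exact absurd p1 (by decide)
  · rcases h4 with h | h4
    · subst h
      obtain ⟨u', rfl⟩ := odd_of_cast e1
      obtain ⟨w', rfl⟩ := odd_of_cast e2
      obtain ⟨A', rfl⟩ := odd_of_cast e3
      obtain ⟨B', rfl⟩ := even_of_cast e4
      ring_nf at h2
      omega
    · have := congrArg (Int.cast : ℤ → ZMod 2) h4
      have h5 := congrArg (Int.cast : ℤ → ZMod 2) h1
      push_cast at this h5
      rw [e1, e2, e4, e5] at this
      rw [e3, e4, e5] at h5
      revert this h5
      generalize (Z : ZMod 2) = z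
      revert z
      decide
  · rcases h4 with h | h4
    · rw [h] at e6; exact absurd e6 (by decide)
    have hd : w^5 ∣ u^6*Z^2 := ⟨w*C^2 + 3*B*(B*u - C*w), by linear_combination h4⟩
    have hc : IsCoprime (w^5) (u^6) := huw.symm.pow
    have hd2 : w^5 ∣ Z^2 := hc.dvd_of_dvd_mul_left hd
    have hd3 : (w^2)^2 ∣ Z^2 := dvd_trans ⟨w, by ring⟩ hd2
    have hd4 : w^2 ∣ Z := (Int.pow_dvd_pow_iff (by norm_num)).1 hd3
    obtain ⟨k, hk⟩ := hd4
    have hAe : A = w*l - w^2*k := by linarith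
    have hfin : w * (u^3*((l - w*k)*(2*A+B) - 2*B*w*k) + w^2*(2*B^2+A*B+3*B*C+A*C)) = 0 := by
      rw [← h2, hk]
      linear_combination (-u^3*(2*A+B))*hAe
    have h0 := (mul_eq_zero.1 hfin).resolve_left hw
    have := congrArg (Int.cast : ℤ → ZMod 2) h0
    push_cast at this
    rw [e1, e2, e4, e5, e6, e7] at this
    exact absurd this (by simp)
  · obtain ⟨u', rfl⟩ := odd_of_cast e1
    obtain ⟨w', rfl⟩ := even_of_cast e2
    obtain ⟨l', rfl⟩ := even_of_cast e5
    obtain ⟨A', rfl⟩ := odd_of_cast e3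
    obtain ⟨B', rfl⟩ := even_of_cast e4
    ring_nf at h3
    omega

lemma exists_prim (N : ℕ) : ∀ Z A B : ℤ, Z ≠ 0 → Z.natAbs ≤ N →
    ∃ Z' A' B' d : ℤ, d ≠ 0 ∧ Z = d*Z' ∧ A = d*A' ∧ B = d*B' ∧ ¬ (2 ∣ Z' ∧ 2 ∣ A' ∧ 2 ∣ B') := by
  induction N with
  | zero => intro Z A B hZ h; omega
  | succ N ih =>
    intro Z A B hZ h
    by_cases hh : 2 ∣ Z ∧ 2 ∣ A ∧ 2 ∣ B
    · obtain ⟨⟨z, rfl⟩, ⟨a, rfl⟩, ⟨b, rfl⟩⟩ := hh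
      obtain ⟨Z', A', B', d, hd, h1, h2, h3, h4⟩ := ih z a b (by omega) (by omega)
      exact ⟨Z', A', B', 2*d, by omega, by rw [h1]; ring, by rw [h2]; ring, by rw [h3]; ring, h4⟩
    · exact ⟨Z, A, B, 1, by norm_num, by ring, by ring, by ring, hh⟩

lemma exists_triple (p q : ℚ) : ∃ Z A B : ℤ, Z ≠ 0 ∧ (A : ℚ) = Z*p ∧ (B : ℚ) = Z*q ∧
    ¬ (2 ∣ Z ∧ 2 ∣ A ∧ 2 ∣ B) := by
  have hp : (p.den : ℚ) ≠ 0 := by exact_mod_cast p.den_nz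
  have hq : (q.den : ℚ) ≠ 0 := by exact_mod_cast q.den_nz
  have hne : (p.den : ℤ) * q.den ≠ 0 := by
    have h1 := p.den_nz
    have h2 := q.den_nz
    positivity
  obtain ⟨Z, A, B, d, hd, h1, h2, h3, h4⟩ := exists_prim _ ((p.den : ℤ) * q.den) (p.num * q.den)
    (q.num * p.den) hne le_rfl
  have hdq : (d : ℚ) ≠ 0 := by exact_mod_cast hd
  have g1 := congrArg (Int.cast : ℤ → ℚ) h1
  have g2 := congrArg (Int.cast : ℤ → ℚ) h2
  have g3 := congrArg (Int.cast : ℤ → ℚ) h3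
  push_cast at g1 g2 g3
  have np := Rat.mul_den_eq_num p
  have nq := Rat.mul_den_eq_num q
  refine ⟨Z, A, B, ?_, ?_, ?_, h4⟩
  · rintro rfl; simp at h1
  · apply mul_left_cancel₀ hdq
    rw [← g2, ← np]
    linear_combination p*g1
  · apply mul_left_cancel₀ hdq
    rw [← g3, ← nq]
    linear_combination q*g1

lemma rat_case (a b c x : ℚ) (ha : a ≠ 0)
    (h1 : c*x^3 + 3*b*x^2 + 3*a*x + 1 = 0)
    (h2 : (a*b+c)*x^3 + (3*b*c+2*a^2+b)*x^2 + (2*b^2+a*c+3*a)*x + a*b + 1 = 0)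
    (h3 : (a^3+b^3+c^3)*x^3 + 3*(a^2+2*a*b^2+b*c^2)*x^2 + 3*(a+2*a^2*b+b^2*c)*x + 1 + 2*a^3 + b^3 = 0)
    (h4 : c = 0 ∨ 3*b*(b-c) + (c^2-1)*x = 0) : False := by
  have hx : x ≠ 0 := by rintro rfl; norm_num at h1
  obtain ⟨Z, A, B, hZ, hA, hB, hprim⟩ := exists_triple (a*x) (b*x^2)
  have hZq : (Z : ℚ) ≠ 0 := by exact_mod_cast hZ
  have hwq : (x.den : ℚ) ≠ 0 := by exact_mod_cast x.den_nz
  have hu := (Rat.mul_den_eq_num x).symm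
  have hcop : IsCoprime x.num (x.den : ℤ) := by
    rw [Int.isCoprime_iff_gcd_eq_one]; exact x.reduced
  generalize hwd : (x.den : ℤ) = w at hcop
  have hww : (x.den : ℚ) = (w : ℚ) := by rw [← hwd]; simp
  rw [hww] at hu hwq
  generalize x.num = u at hu hcop
  have hw : w ≠ 0 := by exact_mod_cast hwq
  have hu0 : u ≠ 0 := by
    rintro rfl
    simp at hu
    tauto
  obtain ⟨C, hC⟩ : ∃ C : ℤ, C = -(Z+3*A+3*B) := ⟨_, rfl⟩
  have hCq : (C : ℚ) = Z*(c*x^3) := by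
    rw [hC]; push_cast; rw [hA, hB]; linear_combination (-(Z:ℚ))*h1
  have k2 : u^3*(2*A^2+A*B-2*B*Z) + w^3*(2*B^2+A*B+3*B*C+A*C) = 0 := by
    have : ((u:ℚ)^3*(2*A^2+A*B-2*B*Z) + w^3*(2*B^2+A*B+3*B*C+A*C)) = 0 := by
      rw [hA, hB, hCq, hu]
      linear_combination (x^3*w^3*Z^2)*(h2 - h1)
    exact_mod_cast this
  have k3 : u^6*(Z+A)^3 + u^3*w^3*(2*(A+B)^3-B^3) + w^6*(B+C)^3 = 0 := by
    have : (u:ℚ)^6*(Z+A)^3 + u^3*w^3*(2*(A+B)^3-B^3) + w^6*(B+C)^3 = 0 := by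
      rw [hA, hB, hCq, hu]
      linear_combination (x^6*w^6*Z^3)*h3
    exact_mod_cast this
  have k4 : C = 0 ∨ u^6*Z^2 - w^6*C^2 = 3*B*(B*u*w^5 - C*w^6) := by
    rcases h4 with h | h
    · left
      have : (C:ℚ) = 0 := by rw [hCq, h]; ring
      exact_mod_cast this
    · right
      have : (u:ℚ)^6*Z^2 - w^6*C^2 = 3*B*(B*u*w^5 - C*w^6) := by
        rw [hB, hCq, hu]
        linear_combination (-x^5*w^6*Z^2)*h
      exact_mod_cast this
  have dn : u ∣ B + C := by
    have e1 : u^3 ∣ (w^2*(B+C))^3 :=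
      ⟨-(u^3*(Z+A)^3 + w^3*(2*(A+B)^3-B^3)), by linear_combination k3⟩
    have e2 : u ∣ w^2*(B+C) := (Int.pow_dvd_pow_iff (by norm_num)).1 e1
    exact (hcop.pow_right (n := 2)).dvd_of_dvd_mul_left e2
  have dl : w ∣ Z + A := by
    have e1 : w^3 ∣ (u^2*(Z+A))^3 :=
      ⟨-(w^3*(B+C)^3 + u^3*(2*(A+B)^3-B^3)), by linear_combination k3⟩
    have e2 : w ∣ u^2*(Z+A) := (Int.pow_dvd_pow_iff (by norm_num)).1 e1
    exact (hcop.symm.pow_right (n := 2)).dvd_of_dvd_mul_left e2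
  obtain ⟨n, hn⟩ := dn
  obtain ⟨l, hl⟩ := dl
  have k3' : u^3*l^3 + w^3*n^3 + 2*(A+B)^3 - B^3 = 0 := by
    rw [hn, hl] at k3
    have : (u^3*w^3) * (u^3*l^3 + w^3*n^3 + 2*(A+B)^3 - B^3) = 0 := by linear_combination k3
    rcases mul_eq_zero.1 this with h | h
    · exfalso; revert h; positivity
    · exact h
  have hA0 : A ≠ 0 := by
    rintro rfl
    have : (Z:ℚ)*(a*x) ≠ 0 := by positivity
    apply this; rw [← hA]; simp
  exact core_int u w Z A B C l n hw hA0 hcop hprim (by rw [hC]; ring) hn hl k2 k3' k4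

lemma no_cbrt3 (r : ℚ) (h : r^3 = 3) : False := by
  have hi : Irrational (r : ℝ) := by
    apply irrational_nrt_of_notint_nrt 3 3 (by exact_mod_cast congrArg (Rat.cast : ℚ → ℝ) h) _ (by norm_num)
    rintro ⟨y, hy⟩
    have h3 : (y:ℝ)^3 = 3 := by rw [← hy]; exact_mod_cast congrArg (Rat.cast : ℚ → ℝ) h
    have h4 : y^3 = 3 := by exact_mod_cast h3
    have : y < 2 := by
      by_contra hh
      have : (2:ℤ)^3 ≤ y^3 := pow_le_pow_left₀ (by norm_num) (by omega) 3
      omega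
    have : 1 < y := by
      by_contra hh
      nlinarith [sq_nonneg y, sq_nonneg (y+1)]
    omega
  exact hi ⟨r, rfl⟩

lemma irr_case (a b c : ℚ) (ha : a ≠ 0) (x : ℂ) (hx : ∀ q : ℚ, x ≠ q)
    (h1 : (c:ℂ)*x^3 + 3*b*x^2 + 3*a*x + 1 = 0)
    (h2 : ((a:ℂ)*b+c)*x^3 + (3*b*c+2*a^2+b)*x^2 + (2*b^2+a*c+3*a)*x + a*b + 1 = 0)
    (h4 : c = 0 ∨ (3*b*(b-c) + (c^2-1)*x : ℂ) = 0) : False := by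
  have lin : ∀ α β : ℚ, (α:ℂ)*x + β = 0 → α = 0 ∧ β = 0 := by
    intro α β h
    by_cases hα : α = 0
    · refine ⟨hα, ?_⟩
      rw [hα] at h
      simpa using h
    · exfalso
      apply hx (-β/α)
      have : (α:ℂ) ≠ 0 := by exact_mod_cast hα
      push_cast
      field_simp
      linear_combination h
  have hx0 : x ≠ 0 := by have := hx 0; simpa using this
  rcases h4 with rfl | h4
  · skip
    obtain ⟨e1, e2⟩ := lin (6*b^3+5*a*b-3*a^3) (3*a*b^2-a^2+2*b) (by
      push_cast at h1 h2 ⊢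
      linear_combination 3*b*(h2 - h1) - (a*b*x + (a^2-2*b))*(h1))
    by_cases hb : b = 0
    · rw [hb] at e2
      apply ha
      have : a^2 = 0 := by linarith
      exact pow_eq_zero_iff (by norm_num) |>.1 this
    have e3 : 6*b^2 - a - 9*a^2*b = 0 := by
      apply mul_left_cancel₀ hb
      linear_combination e1 - 3*a*e2
    have e4 : a*(1+27*b^3) = -12*b^2 := by
      linear_combination (-1)*e3 + 9*b*e2
    have e5 : (27*b^3-1)*(27*b^3-3) = 0 := by
      apply mul_left_cancel₀ hb
      linear_combination (3/2)*(1+27*b^3)^2*e2 - (9/2*b^2*(1+27*b^3) - 3/2*(a*(1+27*b^3) - 12*b^2))*e4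
    rcases mul_eq_zero.1 e5 with h | h
    · have hb3 : b = 1/3 := by
        have : (3*b-1)*((3*b+1/2)^2+3/4) = 0 := by linear_combination h
        rcases mul_eq_zero.1 this with h | h
        · linarith
        · nlinarith [sq_nonneg (3*b+1/2)]
      rw [hb3] at e4
      have ha3 : a = -2/3 := by linarith
      rw [hb3, ha3] at h1
      push_cast at h1
      have : (x-1)^2 = 0 := by linear_combination h1
      have : x - 1 = 0 := pow_eq_zero_iff (by norm_num) |>.1 this
      apply hx 1
      push_cast
      linear_combination this
    · exact no_cbrt3 (3*b) (by linear_combination h)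
  · obtain ⟨e1, e2⟩ := lin (c^2-1) (3*b*(b-c)) (by push_cast; linear_combination h4)
    have hc : c = 1 ∨ c = -1 := by
      have : (c-1)*(c+1) = 0 := by linear_combination e1
      rcases mul_eq_zero.1 this with h | h
      · left; linarith
      · right; linarith
    have hb : b = 0 ∨ b = c := by
      have : b*(b-c) = 0 := by linear_combination e2/3
      rcases mul_eq_zero.1 this with h | h
      · left; exact h
      · right; linarith
    rcases hb with rfl | rfl
    · obtain ⟨e3, e4⟩ := lin (2*a^2) (a*c) (by
        apply mul_left_cancel₀ hx0
        push_cast at h1 h2 ⊢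
        linear_combination h2 - h1)
      apply ha
      have : a^2 = 0 := by linarith
      exact pow_eq_zero_iff (by norm_num) |>.1 this
    · rcases hc with rfl | rfl
      · obtain ⟨e3, e4⟩ := lin (2*a^2+1-3*a) (2+a-3*a^2) (by
          apply mul_left_cancel₀ hx0
          push_cast at h1 h2 ⊢
          linear_combination h2 - h1 - a*h1)
        have : a = 1 := by nlinarith
        rw [this] at h1
        push_cast at h1
        have : (x+1)^3 = 0 := by linear_combination h1
        have : x + 1 = 0 := pow_eq_zero_iff (by norm_num) |>.1 this
        apply hx (-1)
        push_cast
        linear_combination this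
      · have hq : -2*a*x^2+(2*a^2-3*a+5)*x+(3*a^2-a+2) = (0:ℂ) := by
          apply mul_left_cancel₀ hx0
          push_cast at h1 h2 ⊢
          linear_combination h2 - h1 + a*h1
        obtain ⟨e3, e4⟩ := lin ((2*a^2-3*a+5)^2 + 2*a*(3*a^2-a+2) + 6*a*(2*a^2-3*a+5) - 12*a^3)
            ((2*a^2-3*a+5)*(3*a^2-a+2) + 6*a*(3*a^2-a+2) - 4*a^2) (by
          push_cast at h1 h2 ⊢
          linear_combination (-4*a^2)*h1 + (2*a*x + (2*a^2-3*a+5) + 6*a)*hq)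
        nlinarith [sq_nonneg (a^2), sq_nonneg (a^2+a), sq_nonneg a, sq_nonneg (a+1)]


theorem stmt_0 (a b c : ℚ) (ha : a ≠ 0) (x : ℂ) :
    (c : ℂ) * x ^ 3 + 3 * (b : ℂ) * x ^ 2 + 3 * (a : ℂ) * x + 1 ≠ 0 ∨
    ((a : ℂ) * b + c) * x ^ 3 + (3 * (b : ℂ) * c + 2 * (a : ℂ) ^ 2 + b) * x ^ 2 +
      (2 * (b : ℂ) ^ 2 + (a : ℂ) * c + 3 * a) * x + (a : ℂ) * b + 1 ≠ 0 ∨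
    ((a : ℂ) ^ 3 + (b : ℂ) ^ 3 + (c : ℂ) ^ 3) * x ^ 3 +
      3 * ((a : ℂ) ^ 2 + 2 * (a : ℂ) * b ^ 2 + (b : ℂ) * c ^ 2) * x ^ 2 +
      3 * ((a : ℂ) + 2 * (a : ℂ) ^ 2 * b + (b : ℂ) ^ 2 * c) * x +
      1 + 2 * (a : ℂ) ^ 3 + (b : ℂ) ^ 3 ≠ 0 ∨
    ((a : ℂ) * b + 2 * (a : ℂ) * b * c + (c : ℂ) ^ 3) * x ^ 3 +
      (2 * (a : ℂ) ^ 2 + (b : ℂ) + 2 * (a : ℂ) ^ 2 * c + 3 * (a : ℂ) * b ^ 2 +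
        (b : ℂ) * c + 3 * (b : ℂ) ^ 2 * c) * x ^ 2 +
      (3 * (a : ℂ) + 3 * (a : ℂ) ^ 2 * b + (a : ℂ) * c + 2 * (b : ℂ) ^ 2 +
        2 * (b : ℂ) ^ 2 * c + (a : ℂ) * c ^ 2) * x +
      1 + 2 * (a : ℂ) * b + (a : ℂ) * b * c ≠ 0 := by
  by_contra hcon
  push Not at hcon
  obtain ⟨h1, h2, h3, h4⟩ := hcon
  have hx0 : x ≠ 0 := by rintro rfl; norm_num at h1
  have key : c = 0 ∨ (3*b*(b-c) + (c^2-1)*x : ℂ) = 0 := by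
    have : (c:ℂ) * (x^2 * (3*b*(b-c) + (c^2-1)*x)) = 0 := by
      linear_combination h4 - (1+c)*h2 + (c - a*b)*h1
    rcases mul_eq_zero.1 this with h | h
    · left; exact_mod_cast h
    · right; exact (mul_eq_zero.1 h).resolve_left (pow_ne_zero 2 hx0)
  by_cases hq : ∃ q : ℚ, x = q
  · obtain ⟨q, rfl⟩ := hq
    refine rat_case a b c q ha (by exact_mod_cast h1) (by exact_mod_cast h2)
      (by exact_mod_cast h3) ?_
    rcases key with h | h
    · exact Or.inl h
    · right; exact_mod_cast h
  · push Not at hq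
    exact irr_case a b c ha x hq h1 h2 key
end

section
/- Let a, b, c be rational numbers with a·b·c ≠ 0, and let (w,x,y,z) = Ĝ(1,a,b,c), where Ĝ(w,x,y,z) = (w³+2x³+y³, w²x+2x²y+y²z, wx²+2xy²+yz², x³+2y³+z³). Suppose condition R(a,b,c) holds and condition S(w,x,y,z) holds. Then (a,b,c) is one of (−1, 1, −1), (1, −1, −1), (1, −1, 1), or (1/2, −1/2, −1). -/
/-- Condition R: the gadget `G₁` fails to work on `[1,a,b,c]`. -/
def condR (a b c : ℚ) : Prop :=
  c + 1 = 0 ∨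
  a * b + c ^ 2 + c + 1 = 0 ∨
  2 * a * b + c ^ 2 + 1 = 0 ∨
  3 * a * b + c ^ 2 - c + 1 = 0 ∨
  4 * a * b + c ^ 2 - 2 * c + 1 = 0

/-- Condition S: the normalized signature `[w,x,y,z]` is degenerate,
generalized equality, or affine. -/
def condS (w x y z : ℚ) : Prop :=
  (x ^ 2 = w * y ∧ y ^ 2 = x * z) ∨
  (x = 0 ∧ y = 0) ∨
  (w = y ∧ x = 0 ∧ z = 0) ∨
  (w + y = 0 ∧ x = 0 ∧ z = 0) ∨
  (w = x ∧ w + y = 0 ∧ w + z = 0) ∨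
  (w + x = 0 ∧ w + y = 0 ∧ w = z)

/-- Condition T: the gadget `G₁` fails to work on the normalized signature `[w,x,y,z]`. -/
def condT (w x y z : ℚ) : Prop :=
  z * w + w ^ 2 = 0 ∨
  x * y + z ^ 2 + z * w + w ^ 2 = 0 ∨
  2 * x * y + z ^ 2 + w ^ 2 = 0 ∨
  3 * x * y + z ^ 2 - z * w + w ^ 2 = 0 ∨
  4 * x * y + z ^ 2 - 2 * z * w + w ^ 2 = 0 ∨
  x * y = w * z

/-- The signature produced by the auxiliary gadget `G_aux` from `[w,x,y,z]`. -/
def Ghat (p : ℚ × ℚ × ℚ × ℚ) : ℚ × ℚ × ℚ × ℚ :=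
  (p.1 ^ 3 + 2 * p.2.1 ^ 3 + p.2.2.1 ^ 3,
   p.1 ^ 2 * p.2.1 + 2 * p.2.1 ^ 2 * p.2.2.1 + p.2.2.1 ^ 2 * p.2.2.2,
   p.1 * p.2.1 ^ 2 + 2 * p.2.1 * p.2.2.1 ^ 2 + p.2.2.1 * p.2.2.2 ^ 2,
   p.2.1 ^ 3 + 2 * p.2.2.1 ^ 3 + p.2.2.2 ^ 3)

/-- Horner evaluation of an integer coefficient list (constant term first). -/
def hornerEv {K : Type} [CommRing K] : List ℤ → K → K
  | [], _ => 0
  | a :: l, c => (a : K) + c * hornerEv l c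

/-- Homogenised evaluation of an integer coefficient list. -/
def homEv {K : Type} [CommRing K] : List ℤ → K → K → K
  | [], _, _ => 0
  | a :: l, n, d => (a : K) * d ^ l.length + n * homEv l n d

lemma homEv_horner (l : List ℤ) (c n d : ℚ) (h : c * d = n) :
    d ^ l.length * hornerEv l c = d * homEv l n d := by
  induction l with
  | nil => simp [hornerEv, homEv]
  | cons a l ih =>
    simp only [hornerEv, homEv, List.length_cons]
    rw [pow_succ]
    linear_combination d * c * ih + d * homEv l n d * h

lemma homEv_cast {K : Type} [CommRing K] (l : List ℤ) (n d : ℤ) :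
    ((homEv l n d : ℤ) : K) = homEv l (n : K) (d : K) := by
  induction l with
  | nil => simp [homEv]
  | cons a l ih => simp [homEv, ih]

/-- A polynomial without projective roots modulo `q` has no rational root. -/
lemma no_root (q : ℕ) (hq : q.Prime) (l : List ℤ)
    (hl : ∀ n d : ZMod q, homEv l n d = 0 → n = 0 ∧ d = 0) (c : ℚ) :
    hornerEv l c ≠ 0 := by
  intro h
  have hd : (c.den : ℚ) ≠ 0 := by exact_mod_cast c.den_nz
  have h1 := homEv_horner l c c.num c.den (Rat.mul_den_eq_num c)
  rw [h, mul_zero] at h1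
  have h2 : homEv l (c.num : ℚ) (c.den : ℚ) = 0 := by
    rcases mul_eq_zero.mp h1.symm with h3 | h3
    · exact absurd h3 hd
    · exact h3
  have h3 : homEv l c.num (c.den : ℤ) = 0 := by
    have := homEv_cast (K := ℚ) l c.num (c.den : ℤ)
    rw [Int.cast_natCast, h2] at this
    exact_mod_cast this
  have h4 := homEv_cast (K := ZMod q) l c.num (c.den : ℤ)
  rw [h3, Int.cast_zero] at h4
  obtain ⟨hn, hd'⟩ := hl _ _ h4.symm
  rw [ZMod.intCast_zmod_eq_zero_iff_dvd] at hn hd'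
  have hn' : q ∣ c.num.natAbs := Int.natCast_dvd.mp hn
  have hd'' : q ∣ c.den := by exact_mod_cast hd'
  have := Nat.dvd_gcd hn' hd''
  rw [c.reduced] at this
  exact hq.one_lt.ne' (Nat.dvd_one.mp this)

lemma nr_cube1 (a : ℚ) : 2 * a ^ 3 + 1 ≠ 0 := by
  have := no_root 7 (by norm_num) [1, 0, 0, 2] (by decide +kernel) a
  intro h; apply this; simp only [hornerEv]; push_cast; linear_combination h

lemma nr_cube2 (a : ℚ) : a ^ 3 ≠ 2 := by
  have := no_root 7 (by norm_num) [-2, 0, 0, 1] (by decide +kernel) a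
  intro h; apply this; simp only [hornerEv]; push_cast; linear_combination h

lemma nr_cube3 (a : ℚ) : 16 * a ^ 3 + 1 ≠ 0 := by
  have := no_root 7 (by norm_num) [1, 0, 0, 16] (by decide +kernel) a
  intro h; apply this; simp only [hornerEv]; push_cast; linear_combination h

/-- The target list, in weak form. -/
def Good (a b c : ℚ) : Prop :=
  (a = -1 ∧ b = 1 ∧ c = -1) ∨ (a = 1 ∧ b = -1 ∧ c = -1) ∨
  (a = 1 ∧ b = -1 ∧ c = 1) ∨ (a = 1/2 ∧ b = -1/2 ∧ c = -1)

lemma cube_eq_one {a : ℚ} (h : a ^ 3 = 1) : a = 1 := by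
  have : (a - 1) * (a ^ 2 + a + 1) = 0 := by linear_combination h
  rcases mul_eq_zero.mp this with h | h
  · linarith
  · nlinarith [sq_nonneg (2 * a + 1)]

lemma cube_eq_neg_one {a : ℚ} (h : a ^ 3 = -1) : a = -1 := by
  have := cube_eq_one (a := -a) (by linear_combination -h)
  linarith

/-- the common final step: `a ^ 3 = -1`, `ab = -1`, `c = -1` -/
lemma good_one {a b c : ℚ} (h : a ^ 3 = -1) (hp : a * b = -1) (hc : c = -1) : Good a b c := by
  have ha := cube_eq_neg_one h
  subst ha
  exact Or.inl ⟨rfl, by linarith, hc⟩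

/-- Rank-one points: all the brackets vanish. -/
lemma case_rank1 {a b c : ℚ} (hb : b = a ^ 2) (hc : c = a ^ 3) (hR : condR a b c) :
    Good a b c := by
  have key : a ^ 3 = -1 := by
    have e : a * b = a ^ 3 := by rw [hb]; ring
    rcases hR with h | h | h | h | h
    · linarith
    · have : (a ^ 3 + 1) ^ 2 = 0 := by rw [← h, e, hc]; ring
      linarith [pow_eq_zero_iff (two_ne_zero) |>.mp this]
    · have : (a ^ 3 + 1) ^ 2 = 0 := by rw [← h, mul_assoc, e, hc]; ring
      linarith [pow_eq_zero_iff (two_ne_zero) |>.mp this]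
    · have : (a ^ 3 + 1) ^ 2 = 0 := by rw [← h, mul_assoc, e, hc]; ring
      linarith [pow_eq_zero_iff (two_ne_zero) |>.mp this]
    · have : (a ^ 3 + 1) ^ 2 = 0 := by rw [← h, mul_assoc, e, hc]; ring
      linarith [pow_eq_zero_iff (two_ne_zero) |>.mp this]
  exact good_one key (by rw [hb]; linarith) (by linarith)

/-- x = y = 0 -/
lemma case_xy {a b c : ℚ} (ha : a ≠ 0) (hb : b ≠ 0) (hR : condR a b c)
    (hx : a + 2 * a ^ 2 * b + b ^ 2 * c = 0) (hy : a ^ 2 + 2 * a * b ^ 2 + b * c ^ 2 = 0) :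
    Good a b c := by
  obtain ⟨p, hp⟩ : ∃ p, a * b = p := ⟨_, rfl⟩
  have hp0 : p ≠ 0 := hp ▸ mul_ne_zero ha hb
  have hA : a ^ 3 = -p * (2 * p + c ^ 2) := by rw [← hp]; linear_combination a * hy
  have hX : a ^ 3 * (1 + 2 * p) + p ^ 2 * c = 0 := by rw [← hp]; linear_combination a ^ 2 * hx
  have hq : (2 * p + c ^ 2) * (1 + 2 * p) = p * c := by
    apply mul_left_cancel₀ hp0
    rw [hA] at hX
    linear_combination -hX
  have fin : c = -1 → p = -1 → Good a b c := by
    intro hc hp1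
    exact good_one (by rw [hA, hc, hp1]; norm_num) (by rw [hp, hp1]) hc
  unfold condR at hR
  rw [mul_assoc, mul_assoc, mul_assoc, hp] at hR
  rcases hR with h | h | h | h | h
  · have hc : c = -1 := by linarith
    subst hc
    have h1 : (p + 1) * (4 * p + 1) = 0 := by linear_combination hq
    rcases mul_eq_zero.mp h1 with h1 | h1
    · exact fin rfl (by linarith)
    · have hp4 : p = -1/4 := by linarith
      have h8 : (2 * a) ^ 3 = 1 := by rw [mul_pow, hA, hp4]; norm_num
      have ha2 := cube_eq_one h8
      have ha2 : a = 1/2 := by linarith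
      rw [ha2, hp4] at hp
      exact Or.inr (Or.inr (Or.inr ⟨ha2, by linarith, rfl⟩))
  · have hp1 : p = -(c ^ 2 + c + 1) := by linarith
    have h1 : (c + 1) ^ 2 * (2 * c ^ 2 + 3 * c + 2) = 0 := by
      rw [hp1] at hq; linear_combination hq
    rcases mul_eq_zero.mp h1 with h1 | h1
    · have hc : c = -1 := by linarith [pow_eq_zero_iff (two_ne_zero) |>.mp h1]
      exact fin hc (by rw [hp1, hc]; norm_num)
    · nlinarith [sq_nonneg (4 * c + 3)]
  · have hp1 : p = -(c ^ 2 + 1) / 2 := by linarith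
    have hc0 : c * (c + 1) ^ 2 = 0 := by
      rw [hp1] at hq; linear_combination 2 * hq
    rcases mul_eq_zero.mp hc0 with h1 | h1
    · rw [h1] at hA hX
      exfalso
      have : a ^ 3 * (1 + 2 * p) = 0 := by linear_combination hX
      have hp2 : p = -1/2 := by rw [hp1, h1]; norm_num
      rw [hp2] at hA
      exact nr_cube1 a (by rw [hA]; norm_num)
    · have hc : c = -1 := by linarith [pow_eq_zero_iff (two_ne_zero) |>.mp h1]
      exact fin hc (by rw [hp1, hc]; norm_num)
  · have hp1 : p = -(c ^ 2 - c + 1) / 3 := by linarith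
    have h1 : (c + 1) ^ 2 * ((c - 2) * (2 * c - 1)) = 0 := by
      rw [hp1] at hq; linear_combination -9 * hq
    rcases mul_eq_zero.mp h1 with h1 | h1
    · have hc : c = -1 := by linarith [pow_eq_zero_iff (two_ne_zero) |>.mp h1]
      exact fin hc (by rw [hp1, hc]; norm_num)
    · exfalso
      rcases mul_eq_zero.mp h1 with h1 | h1
      · have hc : c = 2 := by linarith
        exact nr_cube2 a (by rw [hA, hp1, hc]; norm_num)
      · have hc : c = 1/2 := by linarith
        exact nr_cube3 a (by rw [hA, hp1, hc]; norm_num)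
  · have hp1 : p = -(c ^ 2 - 2 * c + 1) / 4 := by linarith
    have h1 : (c + 1) ^ 2 * (c ^ 2 - 3 * c + 1) = 0 := by
      rw [hp1] at hq; linear_combination -4 * hq
    rcases mul_eq_zero.mp h1 with h1 | h1
    · have hc : c = -1 := by linarith [pow_eq_zero_iff (two_ne_zero) |>.mp h1]
      exact fin hc (by rw [hp1, hc]; norm_num)
    · exfalso
      apply no_root 2 (by norm_num) [1, -3, 1] (by decide +kernel) c
      simp only [hornerEv]; push_cast; linear_combination h1

/-- x = z = 0 -/
lemma case_xz {a b c : ℚ} (ha : a ≠ 0) (hb : b ≠ 0) (hc0 : c ≠ 0) (hR : condR a b c)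
    (hx : a + 2 * a ^ 2 * b + b ^ 2 * c = 0) (hz : a ^ 3 + 2 * b ^ 3 + c ^ 3 = 0) :
    Good a b c := by
  obtain ⟨p, hp⟩ : ∃ p, a * b = p := ⟨_, rfl⟩
  have hp0 : p ≠ 0 := hp ▸ mul_ne_zero ha hb
  have hX : a ^ 3 * (1 + 2 * p) + p ^ 2 * c = 0 := by rw [← hp]; linear_combination a ^ 2 * hx
  have hZ : (a ^ 3) ^ 2 + 2 * p ^ 3 + c ^ 3 * a ^ 3 = 0 := by
    rw [← hp]; linear_combination a ^ 3 * hz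
  have hq : p ^ 2 * c ^ 2 + 2 * p * (1 + 2 * p) ^ 2 - c ^ 4 * (1 + 2 * p) = 0 := by
    apply mul_left_cancel₀ (pow_ne_zero 2 hp0)
    linear_combination (1 + 2 * p) ^ 2 * hZ
      + (p ^ 2 * c - a ^ 3 * (1 + 2 * p) - c ^ 3 * (1 + 2 * p)) * hX
  have fin : c = -1 → p = -1 → Good a b c := by
    intro hc hp1
    rw [hc, hp1] at hX
    exact good_one (by linarith) (by rw [hp, hp1]) hc
  unfold condR at hR
  rw [mul_assoc, mul_assoc, mul_assoc, hp] at hR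
  rcases hR with h | h | h | h | h
  · have hc : c = -1 := by linarith
    subst hc
    have h1 : (p + 1) * (8 * p ^ 2 + p - 1) = 0 := by linear_combination hq
    rcases mul_eq_zero.mp h1 with h1 | h1
    · exact fin rfl (by linarith)
    · exfalso
      apply no_root 5 (by norm_num) [-1, 1, 8] (by decide +kernel) p
      simp only [hornerEv]; push_cast; linear_combination h1
  · have hp1 : p = -(c ^ 2 + c + 1) := by linarith
    have h1 : (c + 1) ^ 2 * (5 * c ^ 4 + 10 * c ^ 3 + 11 * c ^ 2 + 6 * c + 2) = 0 := by
      rw [hp1] at hq; linear_combination -hq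
    rcases mul_eq_zero.mp h1 with h1 | h1
    · have hc : c = -1 := by linarith [pow_eq_zero_iff (two_ne_zero) |>.mp h1]
      exact fin hc (by rw [hp1, hc]; norm_num)
    · exfalso
      apply no_root 3 (by norm_num) [2, 6, 11, 10, 5] (by decide +kernel) c
      simp only [hornerEv]; push_cast; linear_combination h1
  · have hp1 : p = -(c ^ 2 + 1) / 2 := by linarith
    have h1 : (c * (c - 1) * (c + 1)) ^ 2 = 0 := by
      rw [hp1] at hq; linear_combination 4 * hq
    have h1 := pow_eq_zero_iff (two_ne_zero) |>.mp h1
    rcases mul_eq_zero.mp h1 with h1 | h1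
    · rcases mul_eq_zero.mp h1 with h1 | h1
      · exact absurd h1 hc0
      · have hc : c = 1 := by linarith
        have hp2 : p = -1 := by rw [hp1, hc]; norm_num
        rw [hc, hp2] at hX
        have ha1 := cube_eq_one (a := a) (by linarith)
        rw [ha1, hp2] at hp
        exact Or.inr (Or.inr (Or.inl ⟨ha1, by linarith, hc⟩))
    · have hc : c = -1 := by linarith
      exact fin hc (by rw [hp1, hc]; norm_num)
  · have hp1 : p = -(c ^ 2 - c + 1) / 3 := by linarith
    have h1 : (c + 1) ^ 2 * (13 * c ^ 4 - 26 * c ^ 3 + 15 * c ^ 2 - 2 * c - 2) = 0 := by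
      rw [hp1] at hq; linear_combination 27 * hq
    rcases mul_eq_zero.mp h1 with h1 | h1
    · have hc : c = -1 := by linarith [pow_eq_zero_iff (two_ne_zero) |>.mp h1]
      exact fin hc (by rw [hp1, hc]; norm_num)
    · exfalso
      apply no_root 5 (by norm_num) [-2, -2, 15, -26, 13] (by decide +kernel) c
      simp only [hornerEv]; push_cast; linear_combination h1
  · have hp1 : p = -(c ^ 2 - 2 * c + 1) / 4 := by linarith
    have h1 : (c + 1) ^ 2 * (7 * c ^ 4 - 22 * c ^ 3 + 13 * c ^ 2 - 2) = 0 := by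
      rw [hp1] at hq; linear_combination 16 * hq
    rcases mul_eq_zero.mp h1 with h1 | h1
    · have hc : c = -1 := by linarith [pow_eq_zero_iff (two_ne_zero) |>.mp h1]
      exact fin hc (by rw [hp1, hc]; norm_num)
    · exfalso
      apply no_root 3 (by norm_num) [-2, 0, 13, -22, 7] (by decide +kernel) c
      simp only [hornerEv]; push_cast; linear_combination h1

/-- the point `b = -1`, `c = -a` of the degenerate locus -/
lemma case_line {a b c : ℚ} (hb : b = -1) (hc : c = -a) (hR : condR a b c) : Good a b c := by
  have key : (a - 1) ^ 2 = 0 := by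
    subst hb hc
    rcases hR with h | h | h | h | h
    · have : a = 1 := by linarith
      rw [this]; norm_num
    all_goals linear_combination h
  have ha : a = 1 := by linarith [pow_eq_zero_iff (two_ne_zero) |>.mp key]
  exact Or.inr (Or.inl ⟨ha, hb, by rw [hc, ha]⟩)

/-- degenerate with `(x, y) ≠ (0, 0)`, given the three minors in bracket form -/
lemma case_degen {a b c : ℚ} (ha : a ≠ 0) (hb : b ≠ 0) (hR : condR a b c)
    (h1 : 2 * a * (b - a ^ 2) ^ 2 + b * (c - a * b) ^ 2 + 2 * a * b * (a * c - b ^ 2) ^ 2 = 0)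
    (h2 : 2 * a * b * (b - a ^ 2) ^ 2 + a * c * (c - a * b) ^ 2
      + 2 * b * c * (a * c - b ^ 2) ^ 2 = 0)
    (h3 : 2 * (b + a ^ 2) * (b - a ^ 2) ^ 2 + (c + a * b) * (c - a * b) ^ 2
      + 2 * (a * c + b ^ 2) * (a * c - b ^ 2) ^ 2 = 0) : Good a b c := by
  by_cases hA : b = a ^ 2
  · subst hA
    have : a ^ 2 * (2 * a ^ 3 + 1) * (c - a ^ 3) ^ 2 = 0 := by linear_combination h1
    have h4 : (c - a ^ 3) ^ 2 = 0 := by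
      rcases mul_eq_zero.mp this with h | h
      · exact absurd h (mul_ne_zero (pow_ne_zero 2 ha) (nr_cube1 a))
      · exact h
    exact case_rank1 rfl (by linarith [pow_eq_zero_iff (two_ne_zero) |>.mp h4]) hR
  have hA' : b - a ^ 2 ≠ 0 := sub_ne_zero.mpr hA
  by_cases hB : c = a * b
  · subst hB
    have : (2 * a * (b - a ^ 2) ^ 2) * (b ^ 3 + 1) = 0 := by linear_combination h1
    rcases mul_eq_zero.mp this with h | h
    · exact absurd h (mul_ne_zero (mul_ne_zero two_ne_zero ha) (pow_ne_zero 2 hA'))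
    · have hb1 := cube_eq_neg_one (a := b) (by linarith)
      exact case_line hb1 (by rw [hb1]; ring) hR
  have hB' : c - a * b ≠ 0 := sub_ne_zero.mpr hB
  by_cases hC : a * c = b ^ 2
  · exfalso
    have h4 : a * (c - a * b) = b * (b - a ^ 2) := by linear_combination hC
    have h5 : (b - a ^ 2) ^ 2 * (2 * a ^ 3 + b ^ 3) = 0 := by
      linear_combination a ^ 2 * h1 - b * (a * (c - a * b) + b * (b - a ^ 2)) * h4
        - 2 * a ^ 3 * b * (a * c - b ^ 2) * hC
    rcases mul_eq_zero.mp h5 with h | h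
    · exact pow_ne_zero 2 hA' h
    · apply nr_cube2 (-(b / a))
      field_simp
      linear_combination -h
  · exfalso
    have hC' : a * c - b ^ 2 ≠ 0 := sub_ne_zero.mpr hC
    -- Cramer's rule
    have h4 : (b - a ^ 2) * (c - a * b) * (a * c - b ^ 2) * (b - a ^ 2) ^ 2 * 2 = 0 := by
      linear_combination (-1 : ℚ) * ((a * c) * (a * c + b ^ 2) - b * c * (c + a * b)) * h1
        - (a * b * (c + a * b) - b * (a * c + b ^ 2)) * h2 - (b * (b * c) - a * b * (a * c)) * h3
    have : (b - a ^ 2) * (c - a * b) * (a * c - b ^ 2) * (b - a ^ 2) ^ 2 * 2 ≠ 0 := by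
      exact mul_ne_zero (mul_ne_zero (mul_ne_zero (mul_ne_zero hA' hB') hC') (pow_ne_zero 2 hA')) two_ne_zero
    exact this h4

lemma elim_A {A s t k2 k1 k0 : ℚ} (hq : A ^ 2 + s * A + t = 0)
    (hc : 2 * A ^ 3 + k2 * A ^ 2 + k1 * A + k0 = 0) :
    (k0 - t * (k2 - 2 * s)) ^ 2
      - s * (k1 - 2 * t - s * (k2 - 2 * s)) * (k0 - t * (k2 - 2 * s))
      + t * (k1 - 2 * t - s * (k2 - 2 * s)) ^ 2 = 0 := by
  obtain ⟨α, hα⟩ : ∃ α, k1 - 2 * t - s * (k2 - 2 * s) = α := ⟨_, rfl⟩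
  obtain ⟨β, hβ⟩ : ∃ β, k0 - t * (k2 - 2 * s) = β := ⟨_, rfl⟩
  have hl : α * A + β = 0 := by
    rw [← hα, ← hβ]
    linear_combination hc - (2 * A + (k2 - 2 * s)) * hq
  rw [hα, hβ]
  linear_combination (β - α * A - s * α) * hl + α ^ 2 * hq

lemma aff_pos_2 {A p c : ℚ} (hp0 : p ≠ 0) (hp : p = -(c ^ 2 + c + 1))
    (hq : A ^ 2 + ((1 + c ^ 3) / 3) * A + (p ^ 3) = 0)
    (hc : (A + 2 * A ^ 2 + p ^ 3) * (A + p * (2 * p + c ^ 2))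
      + (A * (1 + 2 * p) + p ^ 2 * c) ^ 2 = 0) : c = -1 := by
  have h := elim_A hq (k2 := 1 + 2 * p * (2 * p + c ^ 2) + (1 + 2 * p) ^ 2)
    (k1 := p ^ 3 + p * (2 * p + c ^ 2) + 2 * (1 + 2 * p) * p ^ 2 * c)
    (k0 := p ^ 4 * (2 * p + c ^ 2) + p ^ 4 * c ^ 2) (by linear_combination hc)
  have h1 : (c + 1) ^ 4 * hornerEv [223, 1933, 9139, 29688, 73140, 143334, 229906, 306640, 343078, 322734, 254580, 166866, 89419, 38059, 12259, 2706, 324] c = 0 := by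
    simp only [hornerEv]; push_cast
    rw [hp] at h
    linear_combination (27 : ℚ) * h
  rcases mul_eq_zero.mp h1 with h1 | h1
  · linarith [pow_eq_zero_iff (four_ne_zero) |>.mp h1]
  · exact absurd h1 (no_root 11 (by norm_num) _ (by decide +kernel) c)

lemma aff_pos_3 {A p c : ℚ} (hp0 : p ≠ 0) (hp : p = -(c ^ 2 + 1) / 2)
    (hq : A ^ 2 + ((1 + c ^ 3) / 3) * A + (p ^ 3) = 0)
    (hc : (A + 2 * A ^ 2 + p ^ 3) * (A + p * (2 * p + c ^ 2))
      + (A * (1 + 2 * p) + p ^ 2 * c) ^ 2 = 0) : c = -1 := by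
  have h := elim_A hq (k2 := 1 + 2 * p * (2 * p + c ^ 2) + (1 + 2 * p) ^ 2)
    (k1 := p ^ 3 + p * (2 * p + c ^ 2) + 2 * (1 + 2 * p) * p ^ 2 * c)
    (k0 := p ^ 4 * (2 * p + c ^ 2) + p ^ 4 * c ^ 2) (by linear_combination hc)
  have h1 : (c + 1) ^ 4 * hornerEv [7, -28, 199, -116, 985, -316, 2271, -740, 2975, -1140, 2317, -988, 1019, -436, 205, -76, 6] c = 0 := by
    simp only [hornerEv]; push_cast
    rw [hp] at h
    linear_combination (13824 : ℚ) * h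
  rcases mul_eq_zero.mp h1 with h1 | h1
  · linarith [pow_eq_zero_iff (four_ne_zero) |>.mp h1]
  · exact absurd h1 (no_root 11 (by norm_num) _ (by decide +kernel) c)

lemma aff_pos_4 {A p c : ℚ} (hp0 : p ≠ 0) (hp : p = -(c ^ 2 - c + 1) / 3)
    (hq : A ^ 2 + ((1 + c ^ 3) / 3) * A + (p ^ 3) = 0)
    (hc : (A + 2 * A ^ 2 + p ^ 3) * (A + p * (2 * p + c ^ 2))
      + (A * (1 + 2 * p) + p ^ 2 * c) ^ 2 = 0) : c = -1 := by
  have h := elim_A hq (k2 := 1 + 2 * p * (2 * p + c ^ 2) + (1 + 2 * p) ^ 2)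
    (k1 := p ^ 3 + p * (2 * p + c ^ 2) + 2 * (1 + 2 * p) * p ^ 2 * c)
    (k0 := p ^ 4 * (2 * p + c ^ 2) + p ^ 4 * c ^ 2) (by linear_combination hc)
  have h1 : (c + 1) ^ 4 * hornerEv [17, -119, 461, -1264, 2740, -4978, 7806, -10656, 12594, -12730, 10828, -7606, 4301, -1889, 605, -126, 12] c = 0 := by
    simp only [hornerEv]; push_cast
    rw [hp] at h
    linear_combination (19683 : ℚ) * h
  rcases mul_eq_zero.mp h1 with h1 | h1
  · linarith [pow_eq_zero_iff (four_ne_zero) |>.mp h1]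
  · exact absurd h1 (no_root 5 (by norm_num) _ (by decide +kernel) c)

lemma aff_pos_5 {A p c : ℚ} (hp0 : p ≠ 0) (hp : p = -(c ^ 2 - 2 * c + 1) / 4)
    (hq : A ^ 2 + ((1 + c ^ 3) / 3) * A + (p ^ 3) = 0)
    (hc : (A + 2 * A ^ 2 + p ^ 3) * (A + p * (2 * p + c ^ 2))
      + (A * (1 + 2 * p) + p ^ 2 * c) ^ 2 = 0) : c = -1 := by
  have h := elim_A hq (k2 := 1 + 2 * p * (2 * p + c ^ 2) + (1 + 2 * p) ^ 2)
    (k1 := p ^ 3 + p * (2 * p + c ^ 2) + 2 * (1 + 2 * p) * p ^ 2 * c)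
    (k0 := p ^ 4 * (2 * p + c ^ 2) + p ^ 4 * c ^ 2) (by linear_combination hc)
  have h1 : (c + 1) ^ 4 * ((c - 1) ^ 8 * hornerEv [2368, -8430, 13743, -22516, 38181, -44718, 31561, -10608, 675] c) = 0 := by
    simp only [hornerEv]; push_cast
    rw [hp] at h
    linear_combination (7077888 : ℚ) * h
  rcases mul_eq_zero.mp h1 with h1 | h1
  · linarith [pow_eq_zero_iff (four_ne_zero) |>.mp h1]
  · rcases mul_eq_zero.mp h1 with h1 | h1
    · have h2 : c = 1 := by linarith [pow_eq_zero_iff (by norm_num) |>.mp h1]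
      exact absurd (by rw [hp, h2]; norm_num) hp0
    · exact absurd h1 (no_root 7 (by norm_num) _ (by decide +kernel) c)

lemma aff_neg_2 {A p c : ℚ} (hp0 : p ≠ 0) (hp : p = -(c ^ 2 + c + 1))
    (hq : A ^ 2 + (1 - c ^ 3) * A + (-p ^ 3) = 0)
    (hc : (A + 2 * A ^ 2 + p ^ 3) * (A + p * (2 * p + c ^ 2))
      + (A * (1 + 2 * p) + p ^ 2 * c) ^ 2 = 0) : c = -1 := by
  have h := elim_A hq (k2 := 1 + 2 * p * (2 * p + c ^ 2) + (1 + 2 * p) ^ 2)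
    (k1 := p ^ 3 + p * (2 * p + c ^ 2) + 2 * (1 + 2 * p) * p ^ 2 * c)
    (k0 := p ^ 4 * (2 * p + c ^ 2) + p ^ 4 * c ^ 2) (by linear_combination hc)
  have h1 : (c + 1) ^ 4 * hornerEv [31, 265, 1243, 4008, 9788, 18974, 30018, 39368, 43158, 39638, 30404, 19298, 9963, 4063, 1243, 258, 28] c = 0 := by
    simp only [hornerEv]; push_cast
    rw [hp] at h
    linear_combination (1 : ℚ) * h
  rcases mul_eq_zero.mp h1 with h1 | h1
  · linarith [pow_eq_zero_iff (four_ne_zero) |>.mp h1]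
  · exact absurd h1 (no_root 5 (by norm_num) _ (by decide +kernel) c)

lemma aff_neg_3 {A p c : ℚ} (hp0 : p ≠ 0) (hp : p = -(c ^ 2 + 1) / 2)
    (hq : A ^ 2 + (1 - c ^ 3) * A + (-p ^ 3) = 0)
    (hc : (A + 2 * A ^ 2 + p ^ 3) * (A + p * (2 * p + c ^ 2))
      + (A * (1 + 2 * p) + p ^ 2 * c) ^ 2 = 0) : c = -1 := by
  have h := elim_A hq (k2 := 1 + 2 * p * (2 * p + c ^ 2) + (1 + 2 * p) ^ 2)
    (k1 := p ^ 3 + p * (2 * p + c ^ 2) + 2 * (1 + 2 * p) * p ^ 2 * c)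
    (k0 := p ^ 4 * (2 * p + c ^ 2) + p ^ 4 * c ^ 2) (by linear_combination hc)
  have h1 : (c + 1) ^ 4 * hornerEv [7, -28, 35, -92, 125, -60, 267, 116, 275, 204, 97, 108, -25, 12, -15, -4, 2] c = 0 := by
    simp only [hornerEv]; push_cast
    rw [hp] at h
    linear_combination (512 : ℚ) * h
  rcases mul_eq_zero.mp h1 with h1 | h1
  · linarith [pow_eq_zero_iff (four_ne_zero) |>.mp h1]
  · exact absurd h1 (no_root 3 (by norm_num) _ (by decide +kernel) c)

lemma aff_neg_4 {A p c : ℚ} (hp0 : p ≠ 0) (hp : p = -(c ^ 2 - c + 1) / 3)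
    (hq : A ^ 2 + (1 - c ^ 3) * A + (-p ^ 3) = 0)
    (hc : (A + 2 * A ^ 2 + p ^ 3) * (A + p * (2 * p + c ^ 2))
      + (A * (1 + 2 * p) + p ^ 2 * c) ^ 2 = 0) : c = -1 := by
  have h := elim_A hq (k2 := 1 + 2 * p * (2 * p + c ^ 2) + (1 + 2 * p) ^ 2)
    (k1 := p ^ 3 + p * (2 * p + c ^ 2) + 2 * (1 + 2 * p) * p ^ 2 * c)
    (k0 := p ^ 4 * (2 * p + c ^ 2) + p ^ 4 * c ^ 2) (by linear_combination hc)
  have h1 : (c + 1) ^ 4 * hornerEv [409, -3131, 11733, -28912, 52004, -71490, 75958, -59888, 28602, 4486, -25820, 29922, -21667, 10523, -3171, 394, 52] c = 0 := by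
    simp only [hornerEv]; push_cast
    rw [hp] at h
    linear_combination (59049 : ℚ) * h
  rcases mul_eq_zero.mp h1 with h1 | h1
  · linarith [pow_eq_zero_iff (four_ne_zero) |>.mp h1]
  · exact absurd h1 (no_root 5 (by norm_num) _ (by decide +kernel) c)

lemma aff_neg_5 {A p c : ℚ} (hp0 : p ≠ 0) (hp : p = -(c ^ 2 - 2 * c + 1) / 4)
    (hq : A ^ 2 + (1 - c ^ 3) * A + (-p ^ 3) = 0)
    (hc : (A + 2 * A ^ 2 + p ^ 3) * (A + p * (2 * p + c ^ 2))
      + (A * (1 + 2 * p) + p ^ 2 * c) ^ 2 = 0) : c = -1 := by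
  have h := elim_A hq (k2 := 1 + 2 * p * (2 * p + c ^ 2) + (1 + 2 * p) ^ 2)
    (k1 := p ^ 3 + p * (2 * p + c ^ 2) + 2 * (1 + 2 * p) * p ^ 2 * c)
    (k0 := p ^ 4 * (2 * p + c ^ 2) + p ^ 4 * c ^ 2) (by linear_combination hc)
  have h1 : (c + 1) ^ 4 * ((c - 1) ^ 9 * hornerEv [-490, 2204, -2311, 45, -680, -770, 1689, -71] c) = 0 := by
    simp only [hornerEv]; push_cast
    rw [hp] at h
    linear_combination (262144 : ℚ) * h
  rcases mul_eq_zero.mp h1 with h1 | h1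
  · linarith [pow_eq_zero_iff (four_ne_zero) |>.mp h1]
  · rcases mul_eq_zero.mp h1 with h1 | h1
    · have h2 : c = 1 := by linarith [pow_eq_zero_iff (by norm_num) |>.mp h1]
      exact absurd (by rw [hp, h2]; norm_num) hp0
    · exact absurd h1 (no_root 11 (by norm_num) _ (by decide +kernel) c)

/-- the affine case with `c = -1` -/
lemma aff_c {a b : ℚ}
    (h1 : 1 + a ^ 2 + 2 * a * (a ^ 2 + b ^ 2) + b * (b ^ 2 + 1) = 0)
    (h2 : a * (1 + a ^ 2) + 2 * b * (a ^ 2 + b ^ 2) - (b ^ 2 + 1) = 0) : Good a b (-1) := by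
  have h3 : (a + b) * (1 - (a - b) + a * b - (a - b) * (a ^ 2 + b ^ 2)) = 0 := by
    linear_combination b * h1 - a * h2
  rcases mul_eq_zero.mp h3 with h3 | h3
  · have hb : b = -a := by linarith
    subst hb
    have h4 : (a + 1) * (3 * a ^ 2 - 2 * a + 1) = 0 := by linear_combination h1
    rcases mul_eq_zero.mp h4 with h4 | h4
    · exact Or.inl ⟨by linarith, by linarith, rfl⟩
    · nlinarith [sq_nonneg (3 * a - 1)]
  · exfalso
    obtain ⟨s, hs⟩ : ∃ s, a = b + s := ⟨a - b, by ring⟩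
    subst hs
    have h4 : (s + 2) * ((b + s) * b + (s ^ 2 - s + 1)) = 0 := by linear_combination h1 - h2
    rcases mul_eq_zero.mp h4 with h4 | h4
    · have hs : s = -2 := by linarith
      subst hs
      nlinarith [sq_nonneg (b - 1)]
    · have h5 : s * ((s - 1) * (s - 2)) = 0 := by
        linear_combination h3 - (1 - 2 * s) * h4
      rcases mul_eq_zero.mp h5 with h5 | h5
      · subst h5; nlinarith [sq_nonneg b]
      · rcases mul_eq_zero.mp h5 with h5 | h5
        · have hs : s = 1 := by linarith
          subst hs; nlinarith [sq_nonneg (2 * b + 1)]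
        · have hs : s = 2 := by linarith
          subst hs; nlinarith [sq_nonneg (b + 1)]

/-- affine case: `w + y = 0`, `x + z = 0` and `x = w` or `x = - w` -/
lemma case_aff {a b c : ℚ} (ha : a ≠ 0) (hb : b ≠ 0) (hR : condR a b c)
    (hwy : (1 + 2 * a ^ 3 + b ^ 3) + (a ^ 2 + 2 * a * b ^ 2 + b * c ^ 2) = 0)
    (hxz : (a + 2 * a ^ 2 * b + b ^ 2 * c) + (a ^ 3 + 2 * b ^ 3 + c ^ 3) = 0)
    (hw : (1 + 2 * a ^ 3 + b ^ 3) = (a + 2 * a ^ 2 * b + b ^ 2 * c) ∨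
      (1 + 2 * a ^ 3 + b ^ 3) + (a + 2 * a ^ 2 * b + b ^ 2 * c) = 0) : Good a b c := by
  have main : c = -1 → Good a b c := by
    intro hc
    subst hc
    exact aff_c (by linear_combination hwy) (by linear_combination hxz)
  apply main
  obtain ⟨p, hp⟩ : ∃ p, a * b = p := ⟨_, rfl⟩
  have hp0 : p ≠ 0 := hp ▸ mul_ne_zero ha hb
  have hsq : (1 + 2 * a ^ 3 + b ^ 3) * (a ^ 2 + 2 * a * b ^ 2 + b * c ^ 2)
      + (a + 2 * a ^ 2 * b + b ^ 2 * c) ^ 2 = 0 := by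
    rcases hw with h | h
    · linear_combination (1 + 2 * a ^ 3 + b ^ 3) * hwy
        - ((1 + 2 * a ^ 3 + b ^ 3) + (a + 2 * a ^ 2 * b + b ^ 2 * c)) * h
    · linear_combination (1 + 2 * a ^ 3 + b ^ 3) * hwy
        - ((1 + 2 * a ^ 3 + b ^ 3) - (a + 2 * a ^ 2 * b + b ^ 2 * c)) * h
  have hcub : (a ^ 3 + 2 * (a ^ 3) ^ 2 + p ^ 3) * (a ^ 3 + p * (2 * p + c ^ 2))
      + (a ^ 3 * (1 + 2 * p) + p ^ 2 * c) ^ 2 = 0 := by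
    rw [← hp]; linear_combination a ^ 4 * hsq
  unfold condR at hR
  rw [mul_assoc, mul_assoc, mul_assoc, hp] at hR
  rcases hw with hw | hw
  · have hq : (a ^ 3) ^ 2 + ((1 + c ^ 3) / 3) * a ^ 3 + (p ^ 3) = 0 := by
      rw [← hp]; linear_combination a ^ 3 / 3 * (hw + hxz)
    rcases hR with h | h | h | h | h
    · linarith
    · exact aff_pos_2 hp0 (by linarith) hq hcub
    · exact aff_pos_3 hp0 (by linarith) hq hcub
    · exact aff_pos_4 hp0 (by linarith) hq hcub
    · exact aff_pos_5 hp0 (by linarith) hq hcub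
  · have hq : (a ^ 3) ^ 2 + (1 - c ^ 3) * a ^ 3 + (-p ^ 3) = 0 := by
      rw [← hp]; linear_combination a ^ 3 * (hw - hxz)
    rcases hR with h | h | h | h | h
    · linarith
    · exact aff_neg_2 hp0 (by linarith) hq hcub
    · exact aff_neg_3 hp0 (by linarith) hq hcub
    · exact aff_neg_4 hp0 (by linarith) hq hcub
    · exact aff_neg_5 hp0 (by linarith) hq hcub

lemma good_of_cond {a b c : ℚ} (ha : a ≠ 0) (hb : b ≠ 0) (hc : c ≠ 0) (hR : condR a b c)
    (hS : condS (1 + 2 * a ^ 3 + b ^ 3) (a + 2 * a ^ 2 * b + b ^ 2 * c)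
      (a ^ 2 + 2 * a * b ^ 2 + b * c ^ 2) (a ^ 3 + 2 * b ^ 3 + c ^ 3)) : Good a b c := by
  rcases hS with ⟨h1, h2⟩ | ⟨h1, h2⟩ | ⟨-, h1, h2⟩ | ⟨-, h1, h2⟩ | ⟨h1, h2, h3⟩ | ⟨h1, h2, h3⟩
  · by_cases hx : a + 2 * a ^ 2 * b + b ^ 2 * c = 0
    · rw [hx, zero_mul] at h2
      exact case_xy ha hb hR hx (pow_eq_zero_iff (two_ne_zero) |>.mp h2)
    by_cases hy : a ^ 2 + 2 * a * b ^ 2 + b * c ^ 2 = 0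
    · rw [hy, mul_zero] at h1
      exact absurd (pow_eq_zero_iff (two_ne_zero) |>.mp h1) hx
    have h3 : (1 + 2 * a ^ 3 + b ^ 3) * (a ^ 3 + 2 * b ^ 3 + c ^ 3)
        = (a + 2 * a ^ 2 * b + b ^ 2 * c) * (a ^ 2 + 2 * a * b ^ 2 + b * c ^ 2) := by
      apply mul_left_cancel₀ (mul_ne_zero hx hy)
      generalize 1 + 2 * a ^ 3 + b ^ 3 = w at *
      generalize a + 2 * a ^ 2 * b + b ^ 2 * c = x at *
      generalize a ^ 2 + 2 * a * b ^ 2 + b * c ^ 2 = y at *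
      generalize a ^ 3 + 2 * b ^ 3 + c ^ 3 = z at *
      linear_combination -y ^ 2 * h1 - w * y * h2
    exact case_degen ha hb hR (by linear_combination -h1) (by linear_combination -h2)
      (by linear_combination h3)
  · exact case_xy ha hb hR h1 h2
  · exact case_xz ha hb hc hR h1 h2
  · exact case_xz ha hb hc hR h1 h2
  · exact case_aff ha hb hR h2 (by linear_combination h3 - h1) (Or.inl h1)
  · exact case_aff ha hb hR h2 (by linear_combination h1 - h3) (Or.inr h1)

theorem stmt_16 (a b c : ℚ) (habc : a * b * c ≠ 0)
    (hR : condR a b c)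
    (hS : condS (Ghat (1, a, b, c)).1 (Ghat (1, a, b, c)).2.1
      (Ghat (1, a, b, c)).2.2.1 (Ghat (1, a, b, c)).2.2.2) :
    (a, b, c) = (-1, 1, -1) ∨ (a, b, c) = (1, -1, -1) ∨
    (a, b, c) = (1, -1, 1) ∨ (a, b, c) = (1/2, -1/2, -1) := by
  have hc : c ≠ 0 := right_ne_zero_of_mul habc
  have hab : a * b ≠ 0 := left_ne_zero_of_mul habc
  have hS' : condS (1 + 2 * a ^ 3 + b ^ 3) (a + 2 * a ^ 2 * b + b ^ 2 * c)
      (a ^ 2 + 2 * a * b ^ 2 + b * c ^ 2) (a ^ 3 + 2 * b ^ 3 + c ^ 3) := by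
    simpa only [Ghat, one_pow, one_mul] using hS
  simp only [Prod.mk.injEq]
  exact good_of_cond (left_ne_zero_of_mul hab) (right_ne_zero_of_mul hab) hc hR hS'
end

section
/- Let a, b, c be rational numbers with a·b·c ≠ 0, let (w,x,y,z) = Ĝ(1,a,b,c) and (w₂,x₂,y₂,z₂) = Ĝ(w,x,y,z), where Ĝ(w,x,y,z) = (w³+2x³+y³, w²x+2x²y+y²z, wx²+2xy²+yz², x³+2y³+z³). Suppose condition R(a,b,c) holds, condition T(w,x,y,z) holds, and condition S(w₂,x₂,y₂,z₂) holds. Then (a,b,c) is one of (−1, 1, −1), (1, −1, −1), (−1, 1, 1), (1, −1, 1), or (1/2, −1/2, −1). -/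
/-- Horner evaluation of an integer polynomial at a rational. -/
def hor : List ℤ → ℚ → ℚ
  | [], _ => 0
  | a :: L, t => a + t * hor L t

/-- Homogenised Horner evaluation. -/
def hh : List ℤ → ℤ → ℤ → ℤ
  | [], _, _ => 0
  | a :: L, n, d => a * d ^ L.length + n * hh L n d

lemma hh_hor (L : List ℤ) (n d : ℤ) (hd : (d : ℚ) ≠ 0) :
    (hh L n d : ℚ) * d = hor L (n / d) * d ^ L.length := by
  induction L with
  | nil => simp [hh, hor]
  | cons a L ih =>
    simp only [hh, hor, List.length_cons]
    push_cast
    have : (n : ℚ) = (n / d) * d := by field_simp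
    rw [pow_succ]
    calc ((a : ℚ) * d ^ L.length + n * hh L n d) * d
        = a * (d ^ L.length * d) + n * (hh L n d * d) := by ring
      _ = a * (d ^ L.length * d) + ((n / d) * d) * (hor L (n / d) * d ^ L.length) := by
          rw [ih, ← this]
      _ = _ := by ring

lemma hh_mod (L : List ℤ) (n d p : ℤ) : hh L n d ≡ hh L (n % p) (d % p) [ZMOD p] := by
  induction L with
  | nil => exact Int.ModEq.refl _
  | cons a L ih =>
    simp only [hh]
    exact ((Int.ModEq.refl a).mul ((Int.mod_modEq d p).symm.pow _)).add
      ((Int.mod_modEq n p).symm.mul ih)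

/-- `L` has no projective root modulo `p`. -/
def chk (L : List ℤ) (p : ℕ) : Bool :=
  decide (1 < p) && (List.range p).all fun n => (List.range p).all fun d =>
    (n == 0 && d == 0) || decide (hh L n d % p ≠ 0)

lemma norat (L : List ℤ) (p : ℕ) (h : chk L p = true) (t : ℚ) : ¬ hor L t = 0 := by
  intro h0
  simp only [chk, Bool.and_eq_true, decide_eq_true_eq, List.all_eq_true, List.mem_range,
    Bool.or_eq_true, beq_iff_eq] at h
  obtain ⟨hp, h⟩ := h
  have hpz : (p : ℤ) ≠ 0 := by omega
  have hd : ((t.den : ℤ) : ℚ) ≠ 0 := by exact_mod_cast t.den_nz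
  have e := hh_hor L t.num t.den hd
  have et : ((t.num : ℚ) / ((t.den : ℤ) : ℚ)) = t := by
    push_cast
    exact Rat.num_div_den t
  rw [et, h0, zero_mul] at e
  have e2 : hh L t.num t.den = 0 := by
    rcases mul_eq_zero.mp e with e | e
    · exact_mod_cast e
    · exact absurd e hd
  have e3 := hh_mod L t.num t.den p
  rw [e2] at e3
  have a1 := Int.emod_nonneg t.num hpz
  have a2 := Int.emod_lt_of_pos t.num (by omega : (0 : ℤ) < p)
  have b1 := Int.emod_nonneg (t.den : ℤ) hpz
  have b2 := Int.emod_lt_of_pos (t.den : ℤ) (by omega : (0 : ℤ) < p)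
  obtain ⟨u, hu⟩ := Int.eq_ofNat_of_zero_le a1
  obtain ⟨v, hv⟩ := Int.eq_ofNat_of_zero_le b1
  rw [hu, hv] at e3
  rcases h u (by omega) v (by omega) with ⟨h1, h2⟩ | h1
  · subst h1 h2
    have d1 : (p : ℤ) ∣ t.num := Int.dvd_of_emod_eq_zero (by simpa using hu)
    have d2 : (p : ℤ) ∣ t.den := Int.dvd_of_emod_eq_zero (by simpa using hv)
    have d3 : p ∣ t.num.natAbs := Int.natCast_dvd.mp d1
    have d4 : p ∣ t.den := by exact_mod_cast d2
    have := Nat.dvd_gcd d3 d4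
    rw [t.reduced] at this
    have := Nat.le_of_dvd one_pos this
    omega
  · apply h1
    have := e3.symm
    rw [Int.ModEq] at this
    simpa using this

/-- Resultant of two quadratics. -/
lemma res22 {p0 p1 p2 q0 q1 q2 N : ℚ} (hp : p2 * N ^ 2 + p1 * N + p0 = 0)
    (hq : q2 * N ^ 2 + q1 * N + q0 = 0) :
    (p2 * q0 - q2 * p0) ^ 2 - (p2 * q1 - q2 * p1) * (p1 * q0 - q1 * p0) = 0 := by
  linear_combination (q2 * p0 - p2 * q0) * (q2 * hp - p2 * hq)
    - (q2 * p1 - p2 * q1) * ((q2 * N + q1) * hp - (p2 * N + p1) * hq)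

/-- Resultant of a linear and a quadratic polynomial. -/
lemma res12 {p0 p1 q0 q1 q2 N : ℚ} (hp : p1 * N + p0 = 0)
    (hq : q2 * N ^ 2 + q1 * N + q0 = 0) :
    p1 ^ 2 * q0 - p1 * p0 * q1 + p0 ^ 2 * q2 = 0 := by
  linear_combination p1 ^ 2 * hq - (q2 * (p1 * N - p0) + q1 * p1) * hp

/-- Trace zero system, pencil parameter 3. -/
lemma coreA3 (i n J : ℚ) (hC : (12 * i ^ 3 + 2 * i ^ 2 + 8 * i * n ^ 2 + 22 * i + 4 * n ^ 2 + 4) + n * J * (2 * i + 2) = 0)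
    (hA : n * (2 * i ^ 2 - 2 * i + 2 * n ^ 2 + 6) + J * (4 * i ^ 2 + 2 * i + 2 * n ^ 2 + 8) = 0) (hT : J ^ 2 = i ^ 2 + n ^ 2 + 3) : i + 1 = 0 := by
  have hP : (12 * i + 4) * (n ^ 2) ^ 2 + (52 * i ^ 3 + 36 * i ^ 2 + 108 * i + 28) * n ^ 2 + (48 * i ^ 5 + 32 * i ^ 4 + 188 * i ^ 3 + 76 * i ^ 2 + 184 * i + 32) = 0 := by
    linear_combination (4 * i ^ 2 + 2 * i + 2 * n ^ 2 + 8) * hC - n * (2 * i + 2) * hA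
  have hQ : (-12 * i ^ 2 - 16 * i - 20) * (n ^ 2) ^ 2 + (-28 * i ^ 4 - 32 * i ^ 3 - 120 * i ^ 2 - 80 * i - 124) * n ^ 2 + (-16 * i ^ 6 - 16 * i ^ 5 - 116 * i ^ 4 - 80 * i ^ 3 - 268 * i ^ 2 - 96 * i - 192) = 0 := by
    linear_combination (n * (2 * i ^ 2 - 2 * i + 2 * n ^ 2 + 6) - J * (4 * i ^ 2 + 2 * i + 2 * n ^ 2 + 8)) * hA + (4 * i ^ 2 + 2 * i + 2 * n ^ 2 + 8) ^ 2 * hT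
  have hR := res22 hP hQ
  have hF : (i + 1)  ^  4  *  hor [52, 93, 154, 163, 138, 79, 38, 9, 2] i = 0 := by
    simp only [hor]
    push_cast
    linear_combination (1/2048) * hR
  have hN := norat [52, 93, 154, 163, 138, 79, 38, 9, 2] 3 (by decide +kernel) i
  simp only [mul_eq_zero, hN, or_false, pow_eq_zero_iff (by norm_num : (4:ℕ) ≠ 0)] at hF
  exact hF

/-- Trace zero system, pencil parameter 1. -/
lemma coreA1 (i n J : ℚ) (hC : (12 * i ^ 3 + 2 * i ^ 2 + 8 * i * n ^ 2 + 8 * i + 4 * n ^ 2 + 2) + n * J * (2 * i + 2) = 0)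
    (hA : n * (2 * i ^ 2 - 2 * i + 2 * n ^ 2 + 4) + J * (4 * i ^ 2 + 2 * i + 2 * n ^ 2 + 2) = 0) (hT : J ^ 2 = i ^ 2 + n ^ 2 + 1) : i - 1 = 0 := by
  have hP : (12 * i + 4) * (n ^ 2) ^ 2 + (52 * i ^ 3 + 36 * i ^ 2 + 36 * i + 4) * n ^ 2 + (48 * i ^ 5 + 32 * i ^ 4 + 60 * i ^ 3 + 28 * i ^ 2 + 20 * i + 4) = 0 := by
    linear_combination (4 * i ^ 2 + 2 * i + 2 * n ^ 2 + 2) * hC - n * (2 * i + 2) * hA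
  have hQ : (-12 * i ^ 2 - 16 * i + 4) * (n ^ 2) ^ 2 + (-28 * i ^ 4 - 32 * i ^ 3 - 24 * i ^ 2 - 32 * i + 4) * n ^ 2 + (-16 * i ^ 6 - 16 * i ^ 5 - 36 * i ^ 4 - 24 * i ^ 3 - 24 * i ^ 2 - 8 * i - 4) = 0 := by
    linear_combination (n * (2 * i ^ 2 - 2 * i + 2 * n ^ 2 + 4) - J * (4 * i ^ 2 + 2 * i + 2 * n ^ 2 + 2)) * hA + (4 * i ^ 2 + 2 * i + 2 * n ^ 2 + 2) ^ 2 * hT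
  have hR := res22 hP hQ
  have hF : (i - 1)  ^  1  *  hor [-1, -2, 13, 2, 14, -36, -50, -72, -101, -66, -19, -2] i = 0 := by
    simp only [hor]
    push_cast
    linear_combination (1/1024) * hR
  have hN := norat [-1, -2, 13, 2, 14, -36, -50, -72, -101, -66, -19, -2] 3 (by decide +kernel) i
  simp only [mul_eq_zero, hN, or_false, pow_eq_zero_iff (by norm_num : (1:ℕ) ≠ 0)] at hF
  exact hF

/-- Trace zero system, pencil parameter 1/3. -/
lemma coreAt (i n J : ℚ) (hC : (12 * i ^ 3 + 2 * i ^ 2 + 8 * i * n ^ 2 + (10/3) * i + 4 * n ^ 2 + (4/3)) + n * J * (2 * i + 2) = 0)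
    (hA : n * (2 * i ^ 2 - 2 * i + 2 * n ^ 2 + (10/3)) + J * (4 * i ^ 2 + 2 * i + 2 * n ^ 2) = 0) (hT : J ^ 2 = i ^ 2 + n ^ 2 + (1/3)) : i = 0 ∨ 2 * i + 1 = 0 := by
  have hP : (12 * i + 4) * (n ^ 2) ^ 2 + (52 * i ^ 3 + 36 * i ^ 2 + 12 * i - 4) * n ^ 2 + (48 * i ^ 5 + 32 * i ^ 4 + (52/3) * i ^ 3 + 12 * i ^ 2 + (8/3) * i) = 0 := by
    linear_combination (4 * i ^ 2 + 2 * i + 2 * n ^ 2) * hC - n * (2 * i + 2) * hA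
  have hQ : (-12 * i ^ 2 - 16 * i + 12) * (n ^ 2) ^ 2 + (-28 * i ^ 4 - 32 * i ^ 3 + 8 * i ^ 2 - 16 * i + (100/9)) * n ^ 2 + (-16 * i ^ 6 - 16 * i ^ 5 + (-28/3) * i ^ 4 + (-16/3) * i ^ 3 + (-4/3) * i ^ 2) = 0 := by
    linear_combination (n * (2 * i ^ 2 - 2 * i + 2 * n ^ 2 + (10/3)) - J * (4 * i ^ 2 + 2 * i + 2 * n ^ 2)) * hA + (4 * i ^ 2 + 2 * i + 2 * n ^ 2) ^ 2 * hT
  have hR := res22 hP hQ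
  have hF : (i)  ^  1  *  (2 * i + 1)  ^  1  *  hor [325, -80, -1827, 2376, -3834, 2376, 6966, -1512, -4779, -1944, -243] i = 0 := by
    simp only [hor]
    push_cast
    linear_combination (243/2048) * hR
  have hN := norat [325, -80, -1827, 2376, -3834, 2376, 6966, -1512, -4779, -1944, -243] 7 (by decide +kernel) i
  simp only [mul_eq_zero, hN, or_false, pow_eq_zero_iff (by norm_num : (1:ℕ) ≠ 0), pow_eq_zero_iff (by norm_num : (1:ℕ) ≠ 0)] at hF
  exact hF

/-- Trace zero system, pencil parameter 0. -/
lemma coreA0 (i n J : ℚ) (hC : (12 * i ^ 3 + 2 * i ^ 2 + 8 * i * n ^ 2 + i + 4 * n ^ 2 + 1) + n * J * (2 * i + 2) = 0)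
    (hA : n * (2 * i ^ 2 - 2 * i + 2 * n ^ 2 + 3) + J * (4 * i ^ 2 + 2 * i + 2 * n ^ 2 - 1) = 0) (hT : J ^ 2 = i ^ 2 + n ^ 2) : False := by
  have hP : (12 * i + 4) * (n ^ 2) ^ 2 + (52 * i ^ 3 + 36 * i ^ 2 - 8) * n ^ 2 + (48 * i ^ 5 + 32 * i ^ 4 - 4 * i ^ 3 + 4 * i ^ 2 + i - 1) = 0 := by
    linear_combination (4 * i ^ 2 + 2 * i + 2 * n ^ 2 - 1) * hC - n * (2 * i + 2) * hA
  have hQ : (-12 * i ^ 2 - 16 * i + 16) * (n ^ 2) ^ 2 + (-28 * i ^ 4 - 32 * i ^ 3 + 24 * i ^ 2 - 8 * i + 8) * n ^ 2 + (-16 * i ^ 6 - 16 * i ^ 5 + 4 * i ^ 4 + 4 * i ^ 3 - i ^ 2) = 0 := by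
    linear_combination (n * (2 * i ^ 2 - 2 * i + 2 * n ^ 2 + 3) - J * (4 * i ^ 2 + 2 * i + 2 * n ^ 2 - 1)) * hA + (4 * i ^ 2 + 2 * i + 2 * n ^ 2 - 1) ^ 2 * hT
  have hR := res22 hP hQ
  have hF : hor [-4, 8, 8, 12, 187, -344, -650, 660, 855, -182, -455, -170, -20] i = 0 := by
    simp only [hor]
    push_cast
    linear_combination (1/256) * hR
  have hN := norat [-4, 8, 8, 12, 187, -344, -650, 660, 855, -182, -455, -170, -20] 17 (by decide +kernel) i
  exact hN hF

/-- System x+y=0, w=z, pencil parameter 1. -/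
lemma coreF1 (i n J : ℚ) (hC : (2 * i ^ 2 - i * n ^ 2 - i + n ^ 2 + 1) + n * J * (2 * i + 2) = 0)
    (hA : n * (n ^ 2 + 3) + J * (4 * i ^ 2 + n ^ 2 + 1) = 0) (hT : J ^ 2 = i ^ 2 + n ^ 2 + 1) : False := by
  have hP : (-3 * i - 1) * (n ^ 2) ^ 2 + (-4 * i ^ 3 + 6 * i ^ 2 - 8 * i - 4) * n ^ 2 + (8 * i ^ 4 - 4 * i ^ 3 + 6 * i ^ 2 - i + 1) = 0 := by
    linear_combination (4 * i ^ 2 + n ^ 2 + 1) * hC - n * (2 * i + 2) * hA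
  have hQ : (-9 * i ^ 2 + 3) * (n ^ 2) ^ 2 + (-24 * i ^ 4 - 18 * i ^ 2 + 6) * n ^ 2 + (-16 * i ^ 6 - 24 * i ^ 4 - 9 * i ^ 2 - 1) = 0 := by
    linear_combination (n * (n ^ 2 + 3) - J * (4 * i ^ 2 + n ^ 2 + 1)) * hA + (4 * i ^ 2 + n ^ 2 + 1) ^ 2 * hT
  have hR := res22 hP hQ
  have hF : hor [1, -6, -12, -12, -27, 60, 158, 48, -12, -48, -216, -192, -32] i = 0 := by
    simp only [hor]
    push_cast
    linear_combination (1/16) * hR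
  have hN := norat [1, -6, -12, -12, -27, 60, 158, 48, -12, -48, -216, -192, -32] 3 (by decide +kernel) i
  exact hN hF

/-- System x+y=0, w=z, pencil parameter 1/3. -/
lemma coreFt (i n J : ℚ) (hC : (2 * i ^ 2 - i * n ^ 2 + (1/3) * i + n ^ 2 + (1/3)) + n * J * (2 * i + 2) = 0)
    (hA : n * (n ^ 2 + 3) + J * (4 * i ^ 2 + n ^ 2 + (1/3)) = 0) (hT : J ^ 2 = i ^ 2 + n ^ 2 + (1/3)) : False := by
  have hP : (-3 * i - 1) * (n ^ 2) ^ 2 + (-4 * i ^ 3 + 6 * i ^ 2 - 6 * i + (-16/3)) * n ^ 2 + (8 * i ^ 4 + (4/3) * i ^ 3 + 2 * i ^ 2 + (1/9) * i + (1/9)) = 0 := by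
    linear_combination (4 * i ^ 2 + n ^ 2 + (1/3)) * hC - n * (2 * i + 2) * hA
  have hQ : (-9 * i ^ 2 + 5) * (n ^ 2) ^ 2 + (-24 * i ^ 4 - 6 * i ^ 2 + (26/3)) * n ^ 2 + (-16 * i ^ 6 - 8 * i ^ 4 - i ^ 2 + (-1/27)) = 0 := by
    linear_combination (n * (n ^ 2 + 3) - J * (4 * i ^ 2 + n ^ 2 + (1/3))) * hA + (4 * i ^ 2 + n ^ 2 + (1/3)) ^ 2 * hT
  have hR := res22 hP hQ
  have hF : hor [40, 48, 468, 216, -1026, -4212, -8505, 2754, 23814, 16038, -13851, -17496, -2916] i = 0 := by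
    simp only [hor]
    push_cast
    linear_combination (729/256) * hR
  have hN := norat [40, 48, 468, 216, -1026, -4212, -8505, 2754, 23814, 16038, -13851, -17496, -2916] 11 (by decide +kernel) i
  exact hN hF

/-- System x+y=0, w=z, pencil parameter 0. -/
lemma coreF0 (i n J : ℚ) (hC : (2 * i ^ 2 - i * n ^ 2 + i + n ^ 2) + n * J * (2 * i + 2) = 0)
    (hA : n * (n ^ 2 + 3) + J * (4 * i ^ 2 + n ^ 2) = 0) (hT : J ^ 2 = i ^ 2 + n ^ 2) : i = 0 := by
  have hP : (-3 * i - 1) * (n ^ 2) ^ 2 + (-4 * i ^ 3 + 6 * i ^ 2 - 5 * i - 6) * n ^ 2 + (8 * i ^ 4 + 4 * i ^ 3) = 0 := by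
    linear_combination (4 * i ^ 2 + n ^ 2) * hC - n * (2 * i + 2) * hA
  have hQ : (-9 * i ^ 2 + 6) * (n ^ 2) ^ 2 + (-24 * i ^ 4 + 9) * n ^ 2 + (-16 * i ^ 6) = 0 := by
    linear_combination (n * (n ^ 2 + 3) - J * (4 * i ^ 2 + n ^ 2)) * hA + (4 * i ^ 2 + n ^ 2) ^ 2 * hT
  have hR := res22 hP hQ
  have hF : (i)  ^  3  *  hor [243, 513, -756, -2313, -360, 3252, 2688, -1200, -1920, -320] i = 0 := by
    simp only [hor]
    push_cast
    linear_combination (1/4) * hR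
  have hN := norat [243, 513, -756, -2313, -360, 3252, 2688, -1200, -1920, -320] 17 (by decide +kernel) i
  simp only [mul_eq_zero, hN, or_false, pow_eq_zero_iff (by norm_num : (3:ℕ) ≠ 0)] at hF
  exact hF

/-- System x+y=0, w+z=0, pencil parameter 3. -/
lemma coreE3 (i n J : ℚ) (hC : (2 * i ^ 2 - i * n ^ 2 - 5 * i + n ^ 2 + 3) + n * J * (2 * i + 2) = 0)
    (hP : (9 * i + 3) * n ^ 2 + (12 * i ^ 3 + 27 * i + 1) = 0) (hT : J ^ 2 = i ^ 2 + n ^ 2 + 3) : 3 * i + 1 = 0 := by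
  have hQ : (-3 * i ^ 2 - 10 * i - 3) * (n ^ 2) ^ 2 + (-4 * i ^ 4 - 12 * i ^ 3 - 2 * i ^ 2 - 40 * i - 6) * n ^ 2 + (4 * i ^ 4 - 20 * i ^ 3 + 37 * i ^ 2 - 30 * i + 9) = 0 := by
    linear_combination ((2 * i ^ 2 - i * n ^ 2 - 5 * i + n ^ 2 + 3) - n * J * (2 * i + 2)) * hC + n ^ 2 * (2 * i + 2) ^ 2 * hT
  have hR := res12 hP hQ
  have hF : (3 * i + 1)  ^  2  *  hor [6, 8, 9, 0, -3] i = 0 := by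
    simp only [hor]
    push_cast
    linear_combination (1/16) * hR
  have hN := norat [6, 8, 9, 0, -3] 7 (by decide +kernel) i
  simp only [mul_eq_zero, hN, or_false, pow_eq_zero_iff (by norm_num : (2:ℕ) ≠ 0)] at hF
  exact hF

/-- System x+y=0, w+z=0, pencil parameter 1. -/
lemma coreE1 (i n J : ℚ) (hC : (2 * i ^ 2 - i * n ^ 2 - i + n ^ 2 + 1) + n * J * (2 * i + 2) = 0)
    (hP : (9 * i + 3) * n ^ 2 + (12 * i ^ 3 + 9 * i + 1) = 0) (hT : J ^ 2 = i ^ 2 + n ^ 2 + 1) : 3 * i + 1 = 0 := by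
  have hQ : (-3 * i ^ 2 - 10 * i - 3) * (n ^ 2) ^ 2 + (-4 * i ^ 4 - 12 * i ^ 3 - 2 * i ^ 2 - 12 * i - 2) * n ^ 2 + (4 * i ^ 4 - 4 * i ^ 3 + 5 * i ^ 2 - 2 * i + 1) = 0 := by
    linear_combination ((2 * i ^ 2 - i * n ^ 2 - i + n ^ 2 + 1) - n * J * (2 * i + 2)) * hC + n ^ 2 * (2 * i + 2) ^ 2 * hT
  have hR := res12 hP hQ
  have hF : (3 * i + 1)  ^  2  *  hor [3, 2, 9, 0, 6] i = 0 := by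
    simp only [hor]
    push_cast
    linear_combination (1/4) * hR
  have hN := norat [3, 2, 9, 0, 6] 7 (by decide +kernel) i
  simp only [mul_eq_zero, hN, or_false, pow_eq_zero_iff (by norm_num : (2:ℕ) ≠ 0)] at hF
  exact hF

/-- System x+y=0, w+z=0, pencil parameter 1/3. -/
lemma coreEt (i n J : ℚ) (hC : (2 * i ^ 2 - i * n ^ 2 + (1/3) * i + n ^ 2 + (1/3)) + n * J * (2 * i + 2) = 0)
    (hP : (9 * i + 3) * n ^ 2 + (12 * i ^ 3 + 3 * i + 1) = 0) (hT : J ^ 2 = i ^ 2 + n ^ 2 + (1/3)) : i = 0 ∨ 3 * i + 1 = 0 := by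
  have hQ : (-3 * i ^ 2 - 10 * i - 3) * (n ^ 2) ^ 2 + (-4 * i ^ 4 - 12 * i ^ 3 - 2 * i ^ 2 + (-8/3) * i + (-2/3)) * n ^ 2 + (4 * i ^ 4 + (4/3) * i ^ 3 + (13/9) * i ^ 2 + (2/9) * i + (1/9)) = 0 := by
    linear_combination ((2 * i ^ 2 - i * n ^ 2 + (1/3) * i + n ^ 2 + (1/3)) - n * J * (2 * i + 2)) * hC + n ^ 2 * (2 * i + 2) ^ 2 * hT
  have hR := res12 hP hQ
  have hF : (i)  ^  2  *  (3 * i + 1)  ^  2  *  hor [1, 0, 3] i = 0 := by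
    simp only [hor]
    push_cast
    linear_combination (1/16) * hR
  have hN := norat [1, 0, 3] 5 (by decide +kernel) i
  simp only [mul_eq_zero, hN, or_false, pow_eq_zero_iff (by norm_num : (2:ℕ) ≠ 0)] at hF
  exact hF

/-- System x+y=0, w+z=0, pencil parameter 0. -/
lemma coreE0 (i n J : ℚ) (hC : (2 * i ^ 2 - i * n ^ 2 + i + n ^ 2) + n * J * (2 * i + 2) = 0)
    (hP : (9 * i + 3) * n ^ 2 + (12 * i ^ 3 + 1) = 0) (hT : J ^ 2 = i ^ 2 + n ^ 2) : 3 * i + 1 = 0 := by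
  have hQ : (-3 * i ^ 2 - 10 * i - 3) * (n ^ 2) ^ 2 + (-4 * i ^ 4 - 12 * i ^ 3 - 2 * i ^ 2 + 2 * i) * n ^ 2 + (4 * i ^ 4 + 4 * i ^ 3 + i ^ 2) = 0 := by
    linear_combination ((2 * i ^ 2 - i * n ^ 2 + i + n ^ 2) - n * J * (2 * i + 2)) * hC + n ^ 2 * (2 * i + 2) ^ 2 * hT
  have hR := res12 hP hQ
  have hF : (3 * i + 1)  ^  2  *  hor [-3, 2, 9, 0, 60] i = 0 := by
    simp only [hor]
    push_cast
    linear_combination (1) * hR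
  have hN := norat [-3, 2, 9, 0, 60] 7 (by decide +kernel) i
  simp only [mul_eq_zero, hN, or_false, pow_eq_zero_iff (by norm_num : (2:ℕ) ≠ 0)] at hF
  exact hF

/-- Degenerate signature. -/
def Deg (w x y z : ℚ) : Prop := x ^ 2 = w * y ∧ y ^ 2 = x * z ∧ x * y = w * z

/-- Symmetric form of the condition `condT` (without `w = 0`). -/
def TT (w x y z : ℚ) : Prop :=
  w + z = 0 ∨
  x * y = -(z ^ 2 + z * w + w ^ 2) ∨
  x * y = -(z ^ 2 + w ^ 2) / 2 ∨
  x * y = -(z ^ 2 - z * w + w ^ 2) / 3 ∨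
  x * y = -(z ^ 2 - 2 * z * w + w ^ 2) / 4 ∨
  x * y = w * z

lemma TT_of_condT {w x y z : ℚ} (h : condT w x y z) : w = 0 ∨ TT w x y z := by
  rcases h with h | h | h | h | h | h
  · have : w * (w + z) = 0 := by linear_combination h
    rcases mul_eq_zero.mp this with h | h
    · exact Or.inl h
    · exact Or.inr (Or.inl h)
  · right; right; left; linear_combination h
  · right; right; right; left; linear_combination h / 2
  · right; right; right; right; left; linear_combination h / 3
  · right; right; right; right; right; left; linear_combination h / 4
  · right; right; right; right; right; right; exact h

lemma norat2 (L : List ℤ) (p : ℕ) (h : chk L p = true) {u v : ℚ}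
    (h0 : ∀ t, u = t * v → v ^ L.length * hor L t = 0) : v = 0 := by
  by_contra hv
  have := h0 (u / v) (by field_simp)
  exact norat L p h _ ((mul_eq_zero.mp this).resolve_left (pow_ne_zero _ hv))

lemma cube_two {u v : ℚ} (h : u ^ 3 = 2 * v ^ 3) : u = 0 ∧ v = 0 := by
  have hv : v = 0 := by
    apply norat2 [-2, 0, 0, 1] 7 (by decide +kernel) (u := u)
    rintro t rfl
    simp only [hor, List.length]
    push_cast
    linear_combination v * h
  subst hv
  refine ⟨?_, rfl⟩
  have : u ^ 3 = 0 := by rw [h]; ring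
  exact pow_eq_zero_iff (by norm_num) |>.mp this

lemma cube_inj {u v : ℚ} (h : u ^ 3 = v ^ 3) : u = v :=
  (Odd.strictMono_pow (by decide : Odd 3)).injective h

/-- Rank-one images. -/
lemma lemB_aux {w x y z : ℚ} (hp : w * y = x ^ 2)
    (H0 : (w * z - x * y) ^ 2 * (w * y) + 2 * (x * z - y ^ 2) ^ 2 * (x * y) = 0)
    (H1 : (w * z - x * y) ^ 2 * (w * z + x * y)
      + 2 * (x * z - y ^ 2) ^ 2 * (x * z + y ^ 2) = 0) : Deg w x y z := by
  by_cases hw : w = 0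
  · subst hw
    have hx : x = 0 := by
      have : x ^ 2 = 0 := by linear_combination -hp
      exact pow_eq_zero_iff (by norm_num) |>.mp this
    subst hx
    have hy : y = 0 := by
      have : y ^ 6 = 0 := by linear_combination H1 / 2
      exact pow_eq_zero_iff (by norm_num) |>.mp this
    subst hy
    simp [Deg]
  · obtain ⟨t, rfl⟩ : ∃ t, x = t * w := ⟨x / w, by field_simp⟩
    have hy : y = t ^ 2 * w := by
      apply mul_left_cancel₀ hw
      linear_combination hp
    subst hy
    have ht : 1 + 2 * t ^ 3 ≠ 0 := by
      intro h
      have := cube_two (u := -1) (v := t) (by linear_combination -h)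
      simp at this
    have h1 : (z - t ^ 3 * w) ^ 2 * (z + t ^ 3 * w) = 0 := by
      have : (w ^ 3 * (1 + 2 * t ^ 3)) * ((z - t ^ 3 * w) ^ 2 * (z + t ^ 3 * w)) = 0 := by
        linear_combination H1
      exact (mul_eq_zero.mp this).resolve_left (by positivity)
    have h0 : (z - t ^ 3 * w) ^ 2 * t ^ 2 = 0 := by
      have : (w ^ 4 * (1 + 2 * t ^ 3)) * ((z - t ^ 3 * w) ^ 2 * t ^ 2) = 0 := by
        linear_combination H0
      exact (mul_eq_zero.mp this).resolve_left (by positivity)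
    have hz : z = t ^ 3 * w := by
      rcases mul_eq_zero.mp h0 with h | h
      · have := pow_eq_zero_iff (by norm_num) |>.mp h
        linear_combination this
      · have := pow_eq_zero_iff (by norm_num) |>.mp h
        subst this
        have h1 : z ^ 3 = 0 := by linear_combination h1
        have := pow_eq_zero_iff (by norm_num) |>.mp h1
        rw [this]; ring
    subst hz
    refine ⟨?_, ?_, ?_⟩ <;> ring

lemma lemB {w x y z : ℚ}
    (h : Deg (w ^ 3 + 2 * x ^ 3 + y ^ 3) (w ^ 2 * x + 2 * x ^ 2 * y + y ^ 2 * z)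
      (w * x ^ 2 + 2 * x * y ^ 2 + y * z ^ 2) (x ^ 3 + 2 * y ^ 3 + z ^ 3)) :
    Deg w x y z ∨ (w + y = 0 ∧ x + z = 0) := by
  obtain ⟨h0, h2, h1⟩ := h
  obtain ⟨p, hp⟩ : ∃ p, p = w * y - x ^ 2 := ⟨_, rfl⟩
  obtain ⟨q, hq⟩ : ∃ q, q = w * z - x * y := ⟨_, rfl⟩
  obtain ⟨r, hr⟩ : ∃ r, r = x * z - y ^ 2 := ⟨_, rfl⟩
  have H0 : 2 * p ^ 2 * (w * x) + q ^ 2 * (w * y) + 2 * r ^ 2 * (x * y) = 0 := by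
    subst hp hq hr; linear_combination -h0
  have H2 : 2 * p ^ 2 * (x * y) + q ^ 2 * (x * z) + 2 * r ^ 2 * (y * z) = 0 := by
    subst hp hq hr; linear_combination -h2
  have H1 : 2 * p ^ 2 * (w * y + x ^ 2) + q ^ 2 * (w * z + x * y)
      + 2 * r ^ 2 * (x * z + y ^ 2) = 0 := by
    subst hp hq hr; linear_combination -h1
  by_cases p0 : p = 0
  · left
    subst hq hr
    rw [p0] at H0 H1 hp
    exact lemB_aux (by linear_combination -hp) (by linear_combination H0)
      (by linear_combination H1)
  by_cases r0 : r = 0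
  · left
    subst hp hq
    rw [r0] at H2 H1 hr
    obtain ⟨a, b, c⟩ := lemB_aux (w := z) (x := y) (y := x) (z := w) (by linear_combination -hr)
      (by linear_combination H2) (by linear_combination H1)
    exact ⟨by linear_combination b, by linear_combination a, by linear_combination c⟩
  have hpqr : r ^ 2 * p * q = 0 := by
    have e : 2 * r ^ 2 * p * q
      = (2 * p ^ 2 * (w * x) + q ^ 2 * (w * y) + 2 * r ^ 2 * (x * y)) * x ^ 2
      - (2 * p ^ 2 * (w * y + x ^ 2) + q ^ 2 * (w * z + x * y)
      + 2 * r ^ 2 * (x * z + y ^ 2)) * x * w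
      + (2 * p ^ 2 * (x * y) + q ^ 2 * (x * z) + 2 * r ^ 2 * (y * z)) * w ^ 2 := by
      subst hp hq hr; ring
    rw [H0, H1, H2] at e
    linear_combination e / 2
  have q0 : q = 0 := by
    rcases mul_eq_zero.mp hpqr with h | h
    · rcases mul_eq_zero.mp h with h | h
      · exact absurd (pow_eq_zero_iff (by norm_num) |>.mp h) r0
      · exact absurd h p0
    · exact h
  rw [q0] at H0 H1 H2
  right
  -- the quadratic form is l1 * (p² l0 + r² l2)
  have K0 : x * (p ^ 2 * w + r ^ 2 * y) = 0 := by linear_combination H0 / 2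
  have K2 : y * (p ^ 2 * x + r ^ 2 * z) = 0 := by linear_combination H2 / 2
  have K1 : y * (p ^ 2 * w + r ^ 2 * y) + x * (p ^ 2 * x + r ^ 2 * z) = 0 := by
    linear_combination H1 / 2
  have hxy : ¬ (x = 0 ∧ y = 0) := by
    rintro ⟨rfl, rfl⟩; apply p0; rw [hp]; ring
  have L : p ^ 2 * w + r ^ 2 * y = 0 ∧ p ^ 2 * x + r ^ 2 * z = 0 := by
    by_cases hx : x = 0
    · have hy : y ≠ 0 := fun hy => hxy ⟨hx, hy⟩
      rw [hx] at K1 K2 ⊢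
      constructor
      · apply mul_left_cancel₀ hy; linear_combination K1
      · apply mul_left_cancel₀ hy; linear_combination K2
    · have a : p ^ 2 * w + r ^ 2 * y = 0 := (mul_eq_zero.mp K0).resolve_left hx
      refine ⟨a, ?_⟩
      rw [a] at K1
      apply mul_left_cancel₀ hx; linear_combination K1
  obtain ⟨L0, L1⟩ := L
  by_cases hw : w = 0
  · subst hw
    have hx : x ≠ 0 := by rintro rfl; apply p0; rw [hp]; ring
    have hy : y = 0 := by
      have : x * y = 0 := by linear_combination hq - q0
      exact (mul_eq_zero.mp this).resolve_left hx
    subst hy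
    refine ⟨by ring, ?_⟩
    subst hp hr
    have : (-x) ^ 3 = z ^ 3 := by
      apply mul_left_cancel₀ (pow_ne_zero 2 hx); linear_combination -L1
    have := cube_inj this
    linear_combination -this
  · obtain ⟨t, rfl⟩ : ∃ t, y = t * w := ⟨y / w, by field_simp⟩
    have hz : z = t * x := by
      apply mul_left_cancel₀ hw; linear_combination q0 - hq
    subst hz
    have hrp : r = -t * p := by rw [hr, hp]; ring
    have : (-1) ^ 3 = t ^ 3 := by
      have : (p ^ 2 * w) * (1 + t ^ 3) = 0 := by rw [hrp] at L0; linear_combination L0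
      have := (mul_eq_zero.mp this).resolve_left (by positivity)
      linear_combination -this
    have := cube_inj this
    subst this
    constructor <;> ring

/-- Images whose two middle entries vanish. -/
lemma lemC {w x y z : ℚ} (hT : w = 0 ∨ TT w x y z)
    (hx : w ^ 2 * x + 2 * x ^ 2 * y + y ^ 2 * z = 0)
    (hy : w * x ^ 2 + 2 * x * y ^ 2 + y * z ^ 2 = 0) :
    Deg w x y z ∨ (x = 0 ∧ z = 0) ∨ (w = 0 ∧ y = 0) ∨ (x = 0 ∧ y = 0) ∨
    (x + y = 0 ∧ w + z = 0 ∧ w = 2 * x) := by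
  by_cases x0 : x = 0
  · subst x0
    have : y * z ^ 2 = 0 := by linear_combination hy
    rcases mul_eq_zero.mp this with h | h
    · simp [h]
    · have := pow_eq_zero_iff (by norm_num) |>.mp h
      simp [this]
  by_cases y0 : y = 0
  · subst y0
    have : w * x ^ 2 = 0 := by linear_combination hy
    rcases mul_eq_zero.mp this with h | h
    · simp [h]
    · exact absurd (pow_eq_zero_iff (by norm_num) |>.mp h) x0
  obtain ⟨k, hk⟩ : ∃ k, k = x * y := ⟨_, rfl⟩
  have k0 : k ≠ 0 := by rw [hk]; positivity
  have e1 : y ^ 3 * z = -(k * (w ^ 2 + 2 * k)) := by rw [hk]; linear_combination y * hx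
  have e2 : x ^ 3 * w = -(k * (z ^ 2 + 2 * k)) := by rw [hk]; linear_combination x * hy
  have e3 : (w ^ 2 + 2 * k) * (z ^ 2 + 2 * k) = k * z * w := by
    apply mul_left_cancel₀ (pow_ne_zero 2 k0)
    have : y ^ 3 * z * (x ^ 3 * w) = (k * (w ^ 2 + 2 * k)) * (k * (z ^ 2 + 2 * k)) := by
      rw [e1, e2]; ring
    rw [hk] at this ⊢
    linear_combination -this
  have hw0 : w ≠ 0 := by
    rintro rfl
    have a : z ^ 2 + 2 * k = 0 := by
      apply mul_left_cancel₀ k0; linear_combination e2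
    have hz : z ≠ 0 := by
      rintro rfl; apply k0; linear_combination a / 2
    have := cube_two (u := -z) (v := y) (by
      apply mul_left_cancel₀ hz
      linear_combination -2 * e1 - (z ^ 2 - 2 * k) * a)
    exact y0 this.2
  have hz0 : z ≠ 0 := by
    rintro rfl
    have a : w ^ 2 + 2 * k = 0 := by
      apply mul_left_cancel₀ k0; linear_combination e1
    have := cube_two (u := -w) (v := x) (by
      apply mul_left_cancel₀ hw0
      linear_combination -2 * e2 - (w ^ 2 - 2 * k) * a)
    exact x0 this.2
  have common : w + z = 0 → k = -w ^ 2 → Deg w x y z := by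
    intro a b
    obtain rfl : z = -w := by linear_combination a
    have hyw : y = w := by
      apply cube_inj
      apply mul_left_cancel₀ hw0
      rw [b] at e1; linear_combination -e1
    subst hyw
    have : x = -y := by
      apply mul_left_cancel₀ y0; linear_combination b - hk
    subst this
    refine ⟨?_, ?_, ?_⟩ <;> ring
  have sq (h : (w + z) ^ 2 = 0) : w + z = 0 := pow_eq_zero_iff (by norm_num) |>.mp h
  rcases hT with hT | hT | hT | hT | hT | hT | hT
  · exact absurd hT hw0
  · have hz : z = -w := by linear_combination hT
    have : (k + w ^ 2) * (4 * k + w ^ 2) = 0 := by rw [hz] at e3; linear_combination e3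
    rcases mul_eq_zero.mp this with h | h
    · exact Or.inl (common hT (by linear_combination h))
    · right; right; right; right
      have b : k = -w ^ 2 / 4 := by linear_combination h / 4
      have : y = -w / 2 := by
        apply cube_inj
        apply mul_left_cancel₀ hw0
        rw [b, hz] at e1; linear_combination -e1
      have hx' : x = w / 2 := by
        apply mul_left_cancel₀ y0
        rw [this] at hk ⊢
        linear_combination b - hk
      rw [this, hx']
      exact ⟨by ring, hT, by ring⟩
  all_goals left
  all_goals rw [← hk] at hT
  · rw [hT] at e3
    have : (w + z) ^ 2 * (2 * z ^ 2 + 3 * z * w + 2 * w ^ 2) = 0 := by linear_combination e3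
    rcases mul_eq_zero.mp this with h | h
    · have h := sq h
      exact common h (by rw [hT]; linear_combination -z * h)
    · exfalso
      have : 0 < w ^ 2 := by positivity
      nlinarith [sq_nonneg (4 * z + 3 * w)]
  · rw [hT] at e3
    have : (w * z) * (w + z) ^ 2 = 0 := by linear_combination 2 * e3
    have h := sq ((mul_eq_zero.mp this).resolve_left (by positivity))
    exact common h (by rw [hT]; linear_combination (w - z) / 2 * h)
  · rw [hT] at e3
    have : (w + z) ^ 2 * ((2 * z - w) * (z - 2 * w)) = 0 := by linear_combination -9 * e3
    rcases mul_eq_zero.mp this with h | h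
    · have h := sq h
      exact common h (by rw [hT]; linear_combination (2 * w - z) / 3 * h)
    · exfalso
      rcases mul_eq_zero.mp h with h | h
      · have hw : w = 2 * z := by linear_combination -h
        rw [hT, hw] at e1
        have := cube_two (u := y) (v := z) (by
          apply mul_left_cancel₀ hz0
          linear_combination e1)
        exact hz0 this.2
      · have hw : z = 2 * w := by linear_combination h
        rw [hT, hw] at e2
        have := cube_two (u := x) (v := w) (by
          apply mul_left_cancel₀ hw0
          linear_combination e2)
        exact hw0 this.2
  · rw [hT] at e3
    have : (w + z) ^ 2 * (z ^ 2 - 3 * z * w + w ^ 2) = 0 := by linear_combination -4 * e3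
    rcases mul_eq_zero.mp this with h | h
    · have h := sq h
      exact common h (by rw [hT]; linear_combination (3 * w - z) / 4 * h)
    · exfalso
      apply hw0
      apply norat2 [1, -3, 1] 3 (by decide +kernel) (u := z)
      rintro t rfl
      simp only [hor, List.length]
      push_cast
      linear_combination w * h
  · rw [hT] at e3
    have : (w * z) * (w + z) ^ 2 = 0 := by linear_combination e3 / 2
    have h := sq ((mul_eq_zero.mp this).resolve_left (by positivity))
    exact common h (by rw [hT]; linear_combination w * h)

/-- Images whose second and fourth entries vanish. -/
lemma lemD {w x y z : ℚ} (hT : w = 0 ∨ TT w x y z)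
    (hx : w ^ 2 * x + 2 * x ^ 2 * y + y ^ 2 * z = 0)
    (hz : x ^ 3 + 2 * y ^ 3 + z ^ 3 = 0) :
    Deg w x y z ∨ (w = 0 ∧ y = 0) ∨ (x + y = 0 ∧ w = z ∧ w = x) := by
  by_cases z0 : z = 0
  · subst z0
    have := cube_two (u := -x) (v := y) (by linear_combination -hz)
    obtain ⟨h1, rfl⟩ := this
    obtain rfl : x = 0 := by linear_combination -h1
    left; simp [Deg]
  by_cases x0 : x = 0
  · exfalso
    subst x0
    have : y ^ 2 * z = 0 := by linear_combination hx
    have := pow_eq_zero_iff (by norm_num) |>.mp ((mul_eq_zero.mp this).resolve_right z0)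
    subst this
    apply z0
    have : z ^ 3 = 0 := by linear_combination hz
    exact pow_eq_zero_iff (by norm_num) |>.mp this
  by_cases y0 : y = 0
  · subst y0
    have : w ^ 2 * x = 0 := by linear_combination hx
    have := pow_eq_zero_iff (by norm_num) |>.mp ((mul_eq_zero.mp this).resolve_right x0)
    simp [this]
  obtain ⟨k, hk⟩ : ∃ k, k = x * y := ⟨_, rfl⟩
  have k0 : k ≠ 0 := by rw [hk]; positivity
  have e1 : y ^ 3 * z = -(k * (w ^ 2 + 2 * k)) := by rw [hk]; linear_combination y * hx
  have e2 : x ^ 3 * z = 2 * k * (w ^ 2 + 2 * k) - z ^ 4 := by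
    linear_combination z * hz - 2 * e1
  have e3 : k ^ 2 * z ^ 2 + 2 * k * (w ^ 2 + 2 * k) ^ 2 - z ^ 4 * (w ^ 2 + 2 * k) = 0 := by
    apply mul_left_cancel₀ k0
    have : y ^ 3 * z * (x ^ 3 * z)
        = (-(k * (w ^ 2 + 2 * k))) * (2 * k * (w ^ 2 + 2 * k) - z ^ 4) := by
      rw [e1, e2]
    have h2 : k ^ 3 * z ^ 2 = y ^ 3 * z * (x ^ 3 * z) := by rw [hk]; ring
    linear_combination this + h2
  have hw0 : w ≠ 0 := by
    rintro rfl
    apply pow_ne_zero 2 z0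
    apply norat2 [-2, 1, 8] 3 (by decide +kernel) (u := k)
    rintro t rfl
    have ht : t ≠ 0 := by rintro rfl; simp at k0
    apply mul_left_cancel₀ ht
    simp only [hor, List.length]
    push_cast
    linear_combination e3
  have common : w + z = 0 → k = -w ^ 2 → Deg w x y z := by
    intro a b
    obtain rfl : z = -w := by linear_combination a
    have hyw : y = w := by
      apply cube_inj
      apply mul_left_cancel₀ hw0
      rw [b] at e1; linear_combination -e1
    subst hyw
    have : x = -y := by
      apply mul_left_cancel₀ y0; linear_combination b - hk
    subst this
    refine ⟨?_, ?_, ?_⟩ <;> ring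
  have sq (h : (w + z) ^ 2 = 0) : w + z = 0 := pow_eq_zero_iff (by norm_num) |>.mp h
  rcases hT with hT | hT | hT | hT | hT | hT | hT
  · exact absurd hT hw0
  · left
    have hz : z = -w := by linear_combination hT
    have : (k + w ^ 2) * (8 * k ^ 2 + k * w ^ 2 - w ^ 4) = 0 := by
      rw [hz] at e3; linear_combination e3
    rcases mul_eq_zero.mp this with h | h
    · exact common hT (by linear_combination h)
    · exfalso
      apply pow_ne_zero 2 hw0
      apply norat2 [-1, 1, 8] 5 (by decide +kernel) (u := k)
      rintro t rfl
      simp only [hor, List.length]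
      push_cast
      linear_combination w ^ 2 * h
  all_goals rw [← hk] at hT
  · left
    rw [hT] at e3
    have : (w + z) ^ 2 * (2 * w ^ 4 + 6 * w ^ 3 * z + 11 * w ^ 2 * z ^ 2 + 10 * w * z ^ 3
      + 5 * z ^ 4) = 0 := by linear_combination -e3
    rcases mul_eq_zero.mp this with h | h
    · have h := sq h
      exact common h (by rw [hT]; linear_combination -z * h)
    · exfalso
      apply hw0
      apply norat2 [2, 6, 11, 10, 5] 3 (by decide +kernel) (u := z)
      rintro t rfl
      simp only [hor, List.length]
      push_cast
      linear_combination w * h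
  · rw [hT] at e3
    have : (z ^ 2 * (w - z) ^ 2) * (w + z) ^ 2 = 0 := by linear_combination 4 * e3
    rcases mul_eq_zero.mp this with h | h
    · have := pow_eq_zero_iff (by norm_num) |>.mp
        ((mul_eq_zero.mp h).resolve_left (by positivity))
      obtain rfl : z = w := by linear_combination -this
      right; right
      have hy : y = -z := by
        apply cube_inj
        apply mul_left_cancel₀ z0
        rw [hT] at e1; linear_combination e1
      have : x = z := by
        apply mul_left_cancel₀ y0
        rw [hy] at hk ⊢
        linear_combination hT - hk
      rw [hy, this]
      exact ⟨by ring, rfl, rfl⟩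
    · left
      have h := sq h
      exact common h (by rw [hT]; linear_combination (w - z) / 2 * h)
  · left
    rw [hT] at e3
    have : (w + z) ^ 2 * (2 * w ^ 4 + 2 * w ^ 3 * z - 15 * w ^ 2 * z ^ 2 + 26 * w * z ^ 3
      - 13 * z ^ 4) = 0 := by linear_combination -27 * e3
    rcases mul_eq_zero.mp this with h | h
    · have h := sq h
      exact common h (by rw [hT]; linear_combination (2 * w - z) / 3 * h)
    · exfalso
      apply hw0
      apply norat2 [2, 2, -15, 26, -13] 5 (by decide +kernel) (u := z)
      rintro t rfl
      simp only [hor, List.length]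
      push_cast
      linear_combination w * h
  · left
    rw [hT] at e3
    have : (w + z) ^ 2 * (2 * w ^ 4 - 13 * w ^ 2 * z ^ 2 + 22 * w * z ^ 3
      - 7 * z ^ 4) = 0 := by linear_combination -16 * e3
    rcases mul_eq_zero.mp this with h | h
    · have h := sq h
      exact common h (by rw [hT]; linear_combination (3 * w - z) / 4 * h)
    · exfalso
      apply hw0
      apply norat2 [2, 0, -13, 22, -7] 3 (by decide +kernel) (u := z)
      rintro t rfl
      simp only [hor, List.length]
      push_cast
      linear_combination w * h
  · left
    rw [hT] at e3
    have : (w * z) * ((w + z) ^ 2 * (z ^ 2 - 2 * w * z - w ^ 2)) = 0 := by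
      linear_combination -e3 / 2
    have := (mul_eq_zero.mp this).resolve_left (by positivity)
    rcases mul_eq_zero.mp this with h | h
    · have h := sq h
      exact common h (by rw [hT]; linear_combination w * h)
    · exfalso
      apply hw0
      apply norat2 [-1, -2, 1] 3 (by decide +kernel) (u := z)
      rintro t rfl
      simp only [hor, List.length]
      push_cast
      linear_combination w * h

lemma no_sqrt {J : ℚ} (L : List ℤ) (p : ℕ) (h : chk L p = true) (h0 : hor L J = 0) : False :=
  norat L p h J h0

/-- Trace-zero system normalised to `w + z = 1`. -/
lemma lemA_norm {w x y z : ℚ} (hs : w + z = 1)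
    (h1 : w ^ 3 + 2 * x ^ 3 + y ^ 3 + (w * x ^ 2 + 2 * x * y ^ 2 + y * z ^ 2) = 0)
    (h2 : w ^ 2 * x + 2 * x ^ 2 * y + y ^ 2 * z + (x ^ 3 + 2 * y ^ 3 + z ^ 3) = 0)
    (hT : x * y = -(z ^ 2 + z * w + w ^ 2) ∨ x * y = -(z ^ 2 + w ^ 2) / 2 ∨
      x * y = -(z ^ 2 - z * w + w ^ 2) / 3 ∨ x * y = -(z ^ 2 - 2 * z * w + w ^ 2) / 4) :
    False := by
  obtain rfl : z = 1 - w := by linear_combination hs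
  obtain ⟨i, hi⟩ : ∃ i, i = x + y := ⟨_, rfl⟩
  obtain ⟨J, hJ⟩ : ∃ J, J = x - y := ⟨_, rfl⟩
  obtain ⟨n, hn⟩ : ∃ n, n = 2 * w - 1 := ⟨_, rfl⟩
  obtain rfl : x = (i + J) / 2 := by linear_combination (-hi - hJ) / 2
  obtain rfl : y = (i - J) / 2 := by linear_combination (hJ - hi) / 2
  obtain rfl : w = (n + 1) / 2 := by linear_combination -hn / 2
  clear hi hJ hn hs
  rcases hT with hT | hT | hT | hT
  · have hT' : J ^ 2 = i ^ 2 + n ^ 2 + 3 := by linear_combination -4 * hT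
    have hC := by
      refine coreA3 i n J ?_ ?_ hT'
      · linear_combination 4 * (h1 + h2) - (1 + 7 * i) * hT'
      · linear_combination 4 * (h1 - h2) - (n + 3 * J) * hT'
    obtain rfl : i = -1 := by linear_combination hC
    have : 28 + 4 * n ^ 2 = 0 := by
      linear_combination -4 * (h1 + h2) + (1 + 7 * (-1)) * hT'
    nlinarith [sq_nonneg n]
  · have hT' : J ^ 2 = i ^ 2 + n ^ 2 + 1 := by linear_combination -4 * hT
    have hC := by
      refine coreA1 i n J ?_ ?_ hT'
      · linear_combination 4 * (h1 + h2) - (1 + 7 * i) * hT'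
      · linear_combination 4 * (h1 - h2) - (n + 3 * J) * hT'
    obtain rfl : i = 1 := by linear_combination hC
    have : (24 + 12 * n ^ 2) * (8 + 2 * n ^ 2) - 4 * n ^ 2 * (2 * n ^ 2 + 4) = 0 := by
      linear_combination (8 + 2 * n ^ 2) * (4 * (h1 + h2) - 8 * hT')
        - 4 * n * (4 * (h1 - h2) - (n + 3 * J) * hT')
    nlinarith [sq_nonneg n, sq_nonneg (n ^ 2)]
  · have hT' : J ^ 2 = i ^ 2 + n ^ 2 + 1 / 3 := by linear_combination -4 * hT
    have hC := by
      refine coreAt i n J ?_ ?_ (by linear_combination hT')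
      · linear_combination 4 * (h1 + h2) - (1 + 7 * i) * hT'
      · linear_combination 4 * (h1 - h2) - (n + 3 * J) * hT'
    rcases hC with rfl | hC
    · have : n ^ 2 * (100 / 9 + 12 * n ^ 2) = 0 := by
        linear_combination (n * (10 / 3 + 2 * n ^ 2) - J * (2 * n ^ 2))
          * (4 * (h1 - h2) - (n + 3 * J) * hT') + (2 * n ^ 2) ^ 2 * hT'
      have := (mul_eq_zero.mp this).resolve_right (by positivity)
      rw [this] at hT'
      refine no_sqrt (J := J) [-1, 0, 3] 5 (by decide +kernel) ?_
      simp only [hor]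
      push_cast
      linear_combination 3 * hT'
    · obtain rfl : i = -1 / 2 := by linear_combination hC / 2
      have : n ^ 2 * (15 / 2 + 2 * n ^ 2) = 0 := by
        linear_combination -(2 * n ^ 2) * (4 * (h1 + h2) - (1 + 7 * (-1 / 2)) * hT')
          + n * (4 * (h1 - h2) - (n + 3 * J) * hT')
      have := (mul_eq_zero.mp this).resolve_right (by positivity)
      rw [this] at hT'
      refine no_sqrt (J := J) [-7, 0, 12] 11 (by decide +kernel) ?_
      simp only [hor]
      push_cast
      linear_combination 12 * hT'
  · have hT' : J ^ 2 = i ^ 2 + n ^ 2 := by linear_combination -4 * hT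
    refine coreA0 i n J ?_ ?_ hT'
    · linear_combination 4 * (h1 + h2) - (1 + 7 * i) * hT'
    · linear_combination 4 * (h1 - h2) - (n + 3 * J) * hT'

/-- Images of trace zero. -/
lemma lemA {w x y z : ℚ} (hT : w = 0 ∨ TT w x y z)
    (h1 : w ^ 3 + 2 * x ^ 3 + y ^ 3 + (w * x ^ 2 + 2 * x * y ^ 2 + y * z ^ 2) = 0)
    (h2 : w ^ 2 * x + 2 * x ^ 2 * y + y ^ 2 * z + (x ^ 3 + 2 * y ^ 3 + z ^ 3) = 0) :
    Deg w x y z := by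
  rcases hT with rfl | hT
  · have hy : y = 0 := by
      apply norat2 [4, 0, 12, 12, 12, 28, 5, 24, 0, 8] 11 (by decide +kernel) (u := x)
      rintro s rfl
      simp only [hor, List.length]
      push_cast
      by_cases y0 : y = 0
      · subst y0; ring
      have a : z ^ 2 = -(y ^ 2 * (2 * s ^ 3 + 2 * s + 1)) := by
        apply mul_left_cancel₀ y0
        linear_combination h1
      have b : 2 * s * (s ^ 2 + 1) * z = y * (s ^ 3 + 2 * s ^ 2 + 2) := by
        apply mul_left_cancel₀ (pow_ne_zero 2 y0)
        linear_combination -h2 + z * a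
      have c : (2 * s * (s ^ 2 + 1)) ^ 2 * z ^ 2 = (y * (s ^ 3 + 2 * s ^ 2 + 2)) ^ 2 := by
        rw [← b]; ring
      rw [a] at c
      linear_combination -y ^ 8 * c
    subst hy
    have hx : x = 0 := by
      have : x ^ 3 = 0 := by linear_combination h1 / 2
      exact pow_eq_zero_iff (by norm_num) |>.mp this
    subst hx
    simp [Deg]
  by_cases m0 : w + z = 0
  · obtain rfl : z = -w := by linear_combination m0
    have hi : (x + y) * (5 * (x + y) ^ 2 + (2 * w + (x - y)) ^ 2 + 6 * (x - y) ^ 2) = 0 := by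
      linear_combination 4 * (h1 + h2)
    have hi : x + y = 0 := by
      rcases mul_eq_zero.mp hi with h | h
      · exact h
      · nlinarith [sq_nonneg (x + y), sq_nonneg (2 * w + (x - y)), sq_nonneg (x - y)]
    obtain rfl : y = -x := by linear_combination hi
    have : (w + x) * ((w - x) ^ 2 + 2 * x ^ 2) = 0 := by linear_combination (h1 - h2) / 2
    have : w + x = 0 := by
      rcases mul_eq_zero.mp this with h | h
      · exact h
      · have a : x ^ 2 = 0 := by nlinarith [sq_nonneg (w - x), sq_nonneg x]
        have a := pow_eq_zero_iff (by norm_num) |>.mp a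
        subst a
        have : w ^ 2 = 0 := by linear_combination h
        have a := pow_eq_zero_iff (by norm_num) |>.mp this
        rw [a]; ring
    obtain rfl : x = -w := by linear_combination this
    refine ⟨?_, ?_, ?_⟩ <;> ring
  obtain ⟨m, hm⟩ : ∃ m, m = w + z := ⟨_, rfl⟩
  have hm0 : m ≠ 0 := by rw [hm]; exact m0
  by_cases hq : x * y = w * z
  · have a : (x ^ 2 + y ^ 2) * (w * y - x ^ 2) = 0 := by
      linear_combination (y ^ 2 + z ^ 2) / 2 * hq + (w * h2 - x * h1) / 2
    have b : (x ^ 2 + y ^ 2) * (x * z - y ^ 2) = 0 := by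
      linear_combination (w ^ 2 + x ^ 2) / 2 * hq + (z * h1 - y * h2) / 2
    by_cases hxy : x ^ 2 + y ^ 2 = 0
    · have hx : x = 0 := by nlinarith [sq_nonneg x, sq_nonneg y]
      have hy : y = 0 := by nlinarith [sq_nonneg x, sq_nonneg y]
      subst hx hy
      exact ⟨by ring, by ring, hq⟩
    · refine ⟨?_, ?_, hq⟩
      · linear_combination -((mul_eq_zero.mp a).resolve_left hxy)
      · linear_combination -((mul_eq_zero.mp b).resolve_left hxy)
  exfalso
  obtain ⟨W, rfl⟩ : ∃ W, w = m * W := ⟨w / m, by field_simp⟩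
  obtain ⟨X, rfl⟩ : ∃ X, x = m * X := ⟨x / m, by field_simp⟩
  obtain ⟨Y, rfl⟩ : ∃ Y, y = m * Y := ⟨y / m, by field_simp⟩
  obtain ⟨Z, rfl⟩ : ∃ Z, z = m * Z := ⟨z / m, by field_simp⟩
  have m2 : m ^ 2 ≠ 0 := pow_ne_zero 2 hm0
  have m3 : m ^ 3 ≠ 0 := pow_ne_zero 3 hm0
  refine lemA_norm (w := W) (x := X) (y := Y) (z := Z) ?_ ?_ ?_ ?_
  · apply mul_left_cancel₀ hm0; linear_combination -hm
  · apply mul_left_cancel₀ m3; linear_combination h1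
  · apply mul_left_cancel₀ m3; linear_combination h2
  · rcases hT with h | h | h | h | h | h
    · exact absurd h m0
    · left; apply mul_left_cancel₀ m2; linear_combination h
    · right; left; apply mul_left_cancel₀ m2; linear_combination h
    · right; right; left; apply mul_left_cancel₀ m2; linear_combination h
    · right; right; right; apply mul_left_cancel₀ m2; linear_combination h
    · exact absurd h hq

/-- Symmetric form of condition `condR`. -/
def RR (w x y z : ℚ) : Prop :=
  w + z = 0 ∨
  x * y = -(z ^ 2 + z * w + w ^ 2) ∨
  x * y = -(z ^ 2 + w ^ 2) / 2 ∨
  x * y = -(z ^ 2 - z * w + w ^ 2) / 3 ∨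
  x * y = -(z ^ 2 - 2 * z * w + w ^ 2) / 4

lemma RR.scale {m w x y z : ℚ} (hm : m ≠ 0) (hT : RR (m * w) (m * x) (m * y) (m * z)) :
    RR w x y z := by
  have m2 : m ^ 2 ≠ 0 := pow_ne_zero 2 hm
  rcases hT with h | h | h | h | h
  · left; apply mul_left_cancel₀ hm; linear_combination h
  · right; left; apply mul_left_cancel₀ m2; linear_combination h
  · right; right; left; apply mul_left_cancel₀ m2; linear_combination h
  · right; right; right; left; apply mul_left_cancel₀ m2; linear_combination h
  · right; right; right; right; apply mul_left_cancel₀ m2; linear_combination h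

lemma RR.TT {w x y z : ℚ} (h : RR w x y z) : TT w x y z := by
  rcases h with h | h | h | h | h
  · exact Or.inl h
  · exact Or.inr (Or.inl h)
  · exact Or.inr (Or.inr (Or.inl h))
  · exact Or.inr (Or.inr (Or.inr (Or.inl h)))
  · exact Or.inr (Or.inr (Or.inr (Or.inr (Or.inl h))))

/-- Images proportional to `(2, 1, -1, -2)`, normalised. -/
lemma lemE_norm {w x y z : ℚ} (hs : w + z = 1) (hT : RR w x y z)
    (h1 : w ^ 2 * x + 2 * x ^ 2 * y + y ^ 2 * z + (w * x ^ 2 + 2 * x * y ^ 2 + y * z ^ 2) = 0)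
    (h2 : w ^ 3 + 2 * x ^ 3 + y ^ 3 + (x ^ 3 + 2 * y ^ 3 + z ^ 3) = 0) : False := by
  obtain rfl : z = 1 - w := by linear_combination hs
  obtain ⟨i, hi⟩ : ∃ i, i = x + y := ⟨_, rfl⟩
  obtain ⟨J, hJ⟩ : ∃ J, J = x - y := ⟨_, rfl⟩
  obtain ⟨n, hn⟩ : ∃ n, n = 2 * w - 1 := ⟨_, rfl⟩
  obtain rfl : x = (i + J) / 2 := by linear_combination (-hi - hJ) / 2
  obtain rfl : y = (i - J) / 2 := by linear_combination (hJ - hi) / 2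
  obtain rfl : w = (n + 1) / 2 := by linear_combination -hn / 2
  clear hi hJ hn hs
  rcases hT with hT | hT | hT | hT | hT
  · norm_num at hT
  · have hT' : J ^ 2 = i ^ 2 + n ^ 2 + 3 := by linear_combination -4 * hT
    have hP : (9 * i + 3) * n ^ 2 + (12 * i ^ 3 + 27 * i + 1) = 0 := by
      linear_combination 4 * h2 - 9 * i * hT'
    have hC := by
      refine coreE3 i n J ?_ hP hT'
      linear_combination 4 * h1 - (1 - 2 * i) * hT'
    obtain rfl : i = -1 / 3 := by linear_combination hC / 3
    norm_num at hP
  · have hT' : J ^ 2 = i ^ 2 + n ^ 2 + 1 := by linear_combination -4 * hT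
    have hP : (9 * i + 3) * n ^ 2 + (12 * i ^ 3 + 9 * i + 1) = 0 := by
      linear_combination 4 * h2 - 9 * i * hT'
    have hC := by
      refine coreE1 i n J ?_ hP hT'
      linear_combination 4 * h1 - (1 - 2 * i) * hT'
    obtain rfl : i = -1 / 3 := by linear_combination hC / 3
    norm_num at hP
  · have hT' : J ^ 2 = i ^ 2 + n ^ 2 + (1 / 3) := by linear_combination -4 * hT
    have hP : (9 * i + 3) * n ^ 2 + (12 * i ^ 3 + 3 * i + 1) = 0 := by
      linear_combination 4 * h2 - 9 * i * hT'
    have hC := by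
      refine coreEt i n J ?_ hP hT'
      linear_combination 4 * h1 - (1 - 2 * i) * hT'
    rcases hC with rfl | hC
    · nlinarith [sq_nonneg n]
    · obtain rfl : i = -1 / 3 := by linear_combination hC / 3
      norm_num at hP
  · have hT' : J ^ 2 = i ^ 2 + n ^ 2 := by linear_combination -4 * hT
    have hP : (9 * i + 3) * n ^ 2 + (12 * i ^ 3 + 1) = 0 := by
      linear_combination 4 * h2 - 9 * i * hT'
    have hC := by
      refine coreE0 i n J ?_ hP hT'
      linear_combination 4 * h1 - (1 - 2 * i) * hT'
    obtain rfl : i = -1 / 3 := by linear_combination hC / 3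
    norm_num at hP

/-- Images proportional to `(2, 1, -1, -2)`. -/
lemma lemE {w x y z : ℚ} (hT : RR w x y z)
    (h1 : w ^ 2 * x + 2 * x ^ 2 * y + y ^ 2 * z + (w * x ^ 2 + 2 * x * y ^ 2 + y * z ^ 2) = 0)
    (h2 : w ^ 3 + 2 * x ^ 3 + y ^ 3 + (x ^ 3 + 2 * y ^ 3 + z ^ 3) = 0)
    (h3 : w ^ 3 + 2 * x ^ 3 + y ^ 3 = 2 * (w ^ 2 * x + 2 * x ^ 2 * y + y ^ 2 * z)) :
    Deg w x y z := by
  by_cases m0 : w + z = 0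
  · obtain rfl : z = -w := by linear_combination m0
    have hi : (x + y) * ((x + y) ^ 2 + 3 * (x - y) ^ 2) = 0 := by linear_combination 4 / 3 * h2
    have hi : x + y = 0 := by
      rcases mul_eq_zero.mp hi with h | h
      · exact h
      · nlinarith [sq_nonneg (x + y), sq_nonneg (x - y)]
    obtain rfl : y = -x := by linear_combination hi
    have : (w + x) * ((2 * w - 3 * x) ^ 2 + 11 * x ^ 2) = 0 := by linear_combination 4 * h3
    have : w + x = 0 := by
      rcases mul_eq_zero.mp this with h | h
      · exact h
      · have a : x ^ 2 = 0 := by nlinarith [sq_nonneg (2 * w - 3 * x), sq_nonneg x]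
        have a := pow_eq_zero_iff (by norm_num) |>.mp a
        subst a
        have : w ^ 2 = 0 := by linear_combination h / 4
        have a := pow_eq_zero_iff (by norm_num) |>.mp this
        rw [a]; ring
    obtain rfl : x = -w := by linear_combination this
    refine ⟨?_, ?_, ?_⟩ <;> ring
  exfalso
  obtain ⟨m, hm⟩ : ∃ m, m = w + z := ⟨_, rfl⟩
  have hm0 : m ≠ 0 := by rw [hm]; exact m0
  obtain ⟨W, rfl⟩ : ∃ W, w = m * W := ⟨w / m, by field_simp⟩
  obtain ⟨X, rfl⟩ : ∃ X, x = m * X := ⟨x / m, by field_simp⟩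
  obtain ⟨Y, rfl⟩ : ∃ Y, y = m * Y := ⟨y / m, by field_simp⟩
  obtain ⟨Z, rfl⟩ : ∃ Z, z = m * Z := ⟨z / m, by field_simp⟩
  have m3 : m ^ 3 ≠ 0 := pow_ne_zero 3 hm0
  refine lemE_norm (w := W) (x := X) (y := Y) (z := Z) ?_ (RR.scale hm0 hT) ?_ ?_
  · apply mul_left_cancel₀ hm0; linear_combination -hm
  · apply mul_left_cancel₀ m3; linear_combination h1
  · apply mul_left_cancel₀ m3; linear_combination h2

/-- Images proportional to `(1, 1, -1, 1)`, normalised. -/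
lemma lemF_norm {w x y z : ℚ} (hs : w + z = 1) (hT : RR w x y z)
    (h1 : w ^ 2 * x + 2 * x ^ 2 * y + y ^ 2 * z + (w * x ^ 2 + 2 * x * y ^ 2 + y * z ^ 2) = 0)
    (h2 : w ^ 3 + 2 * x ^ 3 + y ^ 3 = x ^ 3 + 2 * y ^ 3 + z ^ 3) : x = 0 ∧ y = 0 := by
  obtain rfl : z = 1 - w := by linear_combination hs
  obtain ⟨i, hi⟩ : ∃ i, i = x + y := ⟨_, rfl⟩
  obtain ⟨J, hJ⟩ : ∃ J, J = x - y := ⟨_, rfl⟩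
  obtain ⟨n, hn⟩ : ∃ n, n = 2 * w - 1 := ⟨_, rfl⟩
  obtain rfl : x = (i + J) / 2 := by linear_combination (-hi - hJ) / 2
  obtain rfl : y = (i - J) / 2 := by linear_combination (hJ - hi) / 2
  obtain rfl : w = (n + 1) / 2 := by linear_combination -hn / 2
  clear hi hJ hn hs
  rcases hT with hT | hT | hT | hT | hT
  · norm_num at hT
  · exfalso
    have hT' : J ^ 2 = i ^ 2 + n ^ 2 + 3 := by linear_combination -4 * hT
    have : (27 + 81 * i ^ 2 + 18 * n ^ 2 + 72 * i ^ 4 + 54 * i ^ 2 * n ^ 2 + 3 * n ^ 4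
      + 16 * i ^ 6 + 24 * i ^ 4 * n ^ 2 + 9 * i ^ 2 * n ^ 4) = 0 := by
      linear_combination -(n * (3 + n ^ 2) - J * (4 * i ^ 2 + n ^ 2 + 3))
        * (4 * h2 - J * hT') - (4 * i ^ 2 + n ^ 2 + 3) ^ 2 * hT'
    have h0 : (0 : ℚ) < 27 + 81 * i ^ 2 + 18 * n ^ 2 + 72 * i ^ 4 + 54 * i ^ 2 * n ^ 2 + 3 * n ^ 4
      + 16 * i ^ 6 + 24 * i ^ 4 * n ^ 2 + 9 * i ^ 2 * n ^ 4 := by positivity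
    exact h0.ne' this
  · exfalso
    have hT' : J ^ 2 = i ^ 2 + n ^ 2 + 1 := by linear_combination -4 * hT
    refine coreF1 i n J ?_ ?_ hT'
    · linear_combination 4 * h1 - (1 - 2 * i) * hT'
    · linear_combination 4 * h2 - J * hT'
  · exfalso
    have hT' : J ^ 2 = i ^ 2 + n ^ 2 + (1 / 3) := by linear_combination -4 * hT
    refine coreFt i n J ?_ ?_ hT'
    · linear_combination 4 * h1 - (1 - 2 * i) * hT'
    · linear_combination 4 * h2 - J * hT'
  · have hT' : J ^ 2 = i ^ 2 + n ^ 2 := by linear_combination -4 * hT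
    have hC := by
      refine coreF0 i n J ?_ ?_ hT'
      · linear_combination 4 * h1 - (1 - 2 * i) * hT'
      · linear_combination 4 * h2 - J * hT'
    subst hC
    have : n ^ 2 * (6 + n ^ 2) = 0 := by
      linear_combination -n ^ 2 * (4 * h1 - hT') + 2 * n * (4 * h2 - J * hT')
    have := (mul_eq_zero.mp this).resolve_right (by positivity)
    have hJ : J = 0 := by
      have : J ^ 2 = 0 := by linear_combination hT' + this
      exact pow_eq_zero_iff (by norm_num) |>.mp this
    rw [hJ]; norm_num

/-- Images proportional to `(1, 1, -1, 1)`. -/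
lemma lemF {w x y z : ℚ} (hT : RR w x y z)
    (h1 : w ^ 2 * x + 2 * x ^ 2 * y + y ^ 2 * z + (w * x ^ 2 + 2 * x * y ^ 2 + y * z ^ 2) = 0)
    (h2 : w ^ 3 + 2 * x ^ 3 + y ^ 3 = x ^ 3 + 2 * y ^ 3 + z ^ 3) :
    Deg w x y z ∨ (x = 0 ∧ y = 0) := by
  by_cases m0 : w + z = 0
  · obtain rfl : z = -w := by linear_combination m0
    obtain ⟨i, hi⟩ : ∃ i, i = x + y := ⟨_, rfl⟩
    obtain ⟨J, hJ⟩ : ∃ J, J = x - y := ⟨_, rfl⟩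
    obtain ⟨n, hn⟩ : ∃ n, n = 2 * w := ⟨_, rfl⟩
    obtain rfl : x = (i + J) / 2 := by linear_combination (-hi - hJ) / 2
    obtain rfl : y = (i - J) / 2 := by linear_combination (hJ - hi) / 2
    obtain rfl : w = n / 2 := by linear_combination -hn / 2
    clear hi hJ hn
    have a : i * (n ^ 2 + 2 * i ^ 2 - 2 * J ^ 2 + 2 * J * n) = 0 := by linear_combination 4 * h1
    have b : n ^ 3 + J * (3 * i ^ 2 + J ^ 2) = 0 := by linear_combination 4 * h2
    rcases mul_eq_zero.mp a with rfl | a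
    · have : n = -J := cube_inj (by linear_combination b)
      subst this
      left
      refine ⟨?_, ?_, ?_⟩ <;> ring
    · have c : (2 * J - n) * (4 * J ^ 2 - J * n - 2 * n ^ 2) = 0 := by
        linear_combination 2 * b - 3 * J * a
      have hn : n = 0 := by
        rcases mul_eq_zero.mp c with c | c
        · obtain rfl : n = 2 * J := by linear_combination -c
          nlinarith [sq_nonneg i, sq_nonneg J]
        · apply norat2 [-2, -1, 4] 5 (by decide +kernel) (u := J)
          rintro t rfl
          simp only [hor, List.length]
          push_cast
          linear_combination n * c
      subst hn
      have : J ^ 3 = 0 := by linear_combination c / 8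
      have := pow_eq_zero_iff (by norm_num) |>.mp this
      subst this
      have : i ^ 2 = 0 := by linear_combination a / 2
      have := pow_eq_zero_iff (by norm_num) |>.mp this
      subst this
      right; norm_num
  right
  obtain ⟨m, hm⟩ : ∃ m, m = w + z := ⟨_, rfl⟩
  have hm0 : m ≠ 0 := by rw [hm]; exact m0
  obtain ⟨W, rfl⟩ : ∃ W, w = m * W := ⟨w / m, by field_simp⟩
  obtain ⟨X, rfl⟩ : ∃ X, x = m * X := ⟨x / m, by field_simp⟩
  obtain ⟨Y, rfl⟩ : ∃ Y, y = m * Y := ⟨y / m, by field_simp⟩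
  obtain ⟨Z, rfl⟩ : ∃ Z, z = m * Z := ⟨z / m, by field_simp⟩
  have m3 : m ^ 3 ≠ 0 := pow_ne_zero 3 hm0
  have := lemF_norm (w := W) (x := X) (y := Y) (z := Z)
    (by apply mul_left_cancel₀ hm0; linear_combination -hm) (RR.scale hm0 hT)
    (by apply mul_left_cancel₀ m3; linear_combination h1)
    (by apply mul_left_cancel₀ m3; linear_combination h2)
  rw [this.1, this.2]; simp

/-- Second level: consequences of `condT` on `f` and `condS` on its image. -/
lemma level2 {w x y z : ℚ} (hT : condT w x y z)
    (hS : condS (w ^ 3 + 2 * x ^ 3 + y ^ 3) (w ^ 2 * x + 2 * x ^ 2 * y + y ^ 2 * z)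
      (w * x ^ 2 + 2 * x * y ^ 2 + y * z ^ 2) (x ^ 3 + 2 * y ^ 3 + z ^ 3)) :
    Deg w x y z ∨ (w + y = 0 ∧ x + z = 0) ∨ (x = 0 ∧ z = 0) ∨ (w = 0 ∧ y = 0) ∨
    (x = 0 ∧ y = 0) ∨ (x + y = 0 ∧ w + z = 0 ∧ w = 2 * x) ∨ (x + y = 0 ∧ w = z ∧ w = x) := by
  have hT := TT_of_condT hT
  rcases hS with ⟨a, b⟩ | ⟨a, b⟩ | ⟨a, b, c⟩ | ⟨a, b, c⟩ | ⟨a, b, c⟩ | ⟨a, b, c⟩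
  · by_cases hd : (w ^ 2 * x + 2 * x ^ 2 * y + y ^ 2 * z)
        * (w * x ^ 2 + 2 * x * y ^ 2 + y * z ^ 2)
        = (w ^ 3 + 2 * x ^ 3 + y ^ 3) * (x ^ 3 + 2 * y ^ 3 + z ^ 3)
    · have := lemB ⟨a, b, hd⟩
      tauto
    · have : w ^ 2 * x + 2 * x ^ 2 * y + y ^ 2 * z = 0
          ∧ w * x ^ 2 + 2 * x * y ^ 2 + y * z ^ 2 = 0 := by
        generalize w ^ 2 * x + 2 * x ^ 2 * y + y ^ 2 * z = X at *
        generalize w * x ^ 2 + 2 * x * y ^ 2 + y * z ^ 2 = Y at *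
        generalize w ^ 3 + 2 * x ^ 3 + y ^ 3 = W at *
        generalize x ^ 3 + 2 * y ^ 3 + z ^ 3 = Z at *
        by_cases hX : X = 0
        · refine ⟨hX, ?_⟩
          rw [hX] at b
          have : Y ^ 2 = 0 := by linear_combination b
          exact pow_eq_zero_iff (by norm_num) |>.mp this
        by_cases hY : Y = 0
        · rw [hY] at a
          have : X ^ 2 = 0 := by linear_combination a
          exact absurd (pow_eq_zero_iff (by norm_num) |>.mp this) hX
        exfalso
        apply hd
        apply mul_left_cancel₀ (mul_ne_zero hX hY)
        linear_combination Y ^ 2 * a + W * Y * b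
      have := lemC hT this.1 this.2
      tauto
  · have := lemC hT a b
    tauto
  · have := lemD hT b c
    tauto
  · exact Or.inl (lemA hT a (by rw [b, c]; ring))
  · exact Or.inl (lemA hT b (by linear_combination c - a))
  · exact Or.inl (lemA hT b (by linear_combination a - c))

lemma deg_R {a b c : ℚ} (hR : RR 1 a b c) (h : Deg 1 a b c) :
    (a, b, c) = ((-1, 1, -1) : ℚ × ℚ × ℚ) := by
  obtain ⟨h0, h1, h2⟩ := h
  have hc : c = -1 := by
    have : (c + 1) ^ 2 = 0 := by
      rcases hR with h | h | h | h | h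
      · linear_combination (c + 1) * h
      · linear_combination h - h2
      · linear_combination 2 * (h - h2)
      · linear_combination 3 * (h - h2)
      · linear_combination 4 * (h - h2)
    have := pow_eq_zero_iff (by norm_num) |>.mp this
    linear_combination this
  subst hc
  have : a = -1 := cube_inj (by linear_combination h2 + a * h0)
  subst this
  have : b = 1 := by linear_combination -h0
  subst this
  rfl

theorem stmt_17 (a b c : ℚ) (habc : a * b * c ≠ 0)
    (hR : condR a b c)
    (hT : condT (Ghat (1, a, b, c)).1 (Ghat (1, a, b, c)).2.1
      (Ghat (1, a, b, c)).2.2.1 (Ghat (1, a, b, c)).2.2.2)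
    (hS : condS (Ghat (Ghat (1, a, b, c))).1 (Ghat (Ghat (1, a, b, c))).2.1
      (Ghat (Ghat (1, a, b, c))).2.2.1 (Ghat (Ghat (1, a, b, c))).2.2.2) :
    (a, b, c) = (-1, 1, -1) ∨ (a, b, c) = (1, -1, -1) ∨ (a, b, c) = (-1, 1, 1) ∨
    (a, b, c) = (1, -1, 1) ∨ (a, b, c) = (1/2, -1/2, -1) := by
  have hab : a * b ≠ 0 := left_ne_zero_of_mul habc
  have ha : a ≠ 0 := left_ne_zero_of_mul hab
  have hb : b ≠ 0 := right_ne_zero_of_mul hab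
  have hc : c ≠ 0 := right_ne_zero_of_mul habc
  have hRR : RR 1 a b c := by
    rcases hR with h | h | h | h | h
    · left; linear_combination h
    · right; left; linear_combination h
    · right; right; left; linear_combination h / 2
    · right; right; right; left; linear_combination h / 3
    · right; right; right; right; linear_combination h / 4
  have hRT : (1 : ℚ) = 0 ∨ TT 1 a b c := Or.inr hRR.TT
  have hM : c = 0 ∨ TT c b a 1 := by
    right
    rcases hRR with h | h | h | h | h
    · left; linear_combination h
    · right; left; linear_combination h
    · right; right; left; linear_combination h
    · right; right; right; left; linear_combination h
    · right; right; right; right; left; linear_combination h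
  have fin := fun h : Deg 1 a b c => deg_R hRR h
  rcases level2 hT hS with h | ⟨h1, h2⟩ | ⟨h1, h2⟩ | ⟨h1, h2⟩ | ⟨h1, h2⟩ | ⟨h1, h2, h3⟩ |
    ⟨h1, h2, h3⟩
  all_goals simp only [Ghat] at *
  · rcases lemB h with h | ⟨h1, h2⟩
    · exact Or.inl (fin h)
    · right; left
      obtain rfl : b = -1 := by linear_combination h1
      obtain rfl : c = -a := by linear_combination h2
      have : (a - 1) ^ 2 = 0 := by
        rcases hRR with h | h | h | h | h
        · linear_combination (1 - a) * h
        · linear_combination h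
        · linear_combination 2 * h
        · linear_combination 3 * h
        · linear_combination 4 * h
      have := pow_eq_zero_iff (by norm_num) |>.mp this
      obtain rfl : a = 1 := by linear_combination this
      rfl
  · exact Or.inl (fin (lemA hRT h1 h2))
  · rcases lemD hRT h1 h2 with h | ⟨h1, h2⟩ | ⟨g1, g2, g3⟩
    · exact Or.inl (fin h)
    · norm_num at h1
    · right; right; right; left
      subst g2 g3
      obtain rfl : b = -1 := by linear_combination g1
      rfl
  · rcases lemD hM (by linear_combination h2) (by linear_combination h1) with h | h | ⟨g1, g2, g3⟩
    · refine Or.inl (fin ⟨?_, ?_, ?_⟩)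
      · linear_combination h.2.1
      · linear_combination h.1
      · linear_combination h.2.2
    · exact absurd h.1 hc
    · right; right; left
      subst g2 g3
      obtain rfl : a = -1 := by linear_combination g1
      rfl
  · rcases lemC hRT h1 h2 with h | h | h | h | ⟨g1, g2, g3⟩
    · exact Or.inl (fin h)
    · exact absurd h.1 ha
    · exact absurd h.2 hb
    · exact absurd h.1 ha
    · right; right; right; right
      obtain rfl : a = 1 / 2 := by linear_combination -g3 / 2
      obtain rfl : b = -1 / 2 := by linear_combination g1
      obtain rfl : c = -1 := by linear_combination g2
      norm_num
  · exact Or.inl (fin (lemE hRR h1 h2 h3))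
  · rcases lemF hRR h1 h2 with h | h
    · exact Or.inl (fin h)
    · exact absurd h.1 ha
end
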